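/- arXiv:2308.10833 — 3 statements merged into one kernel-verified Lean document; each statement's English description precedes it below -/
import Mathlib

section
/- For every integer k ≥ 3 and every integer q ≥ 2 there exists a constant C = C(k,q) > 0 such that the following holds: for every k-uniform hypergraph H with m ≥ 1 edges and no isolated vertices, the q-color Ramsey number satisfies r_k(H; q) ≤ tw_k(C·√m). -/
/-- The tower function: `tw 1 x = x` and `tw k x = 2 ^ tw (k-1) x` for `k ≥ 2`. -/
noncomputable def tw : ℕ → ℝ → ℝ
  | 0, x => x
  | 1, x => x
  | (k + 2), x => 2 ^ tw (k + 1) x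

/-- The `q`-color Ramsey number of a hypergraph given by its edge set `E` on a finite
vertex type `V`: the least `N` such that every `q`-coloring of the finite subsets of
`Fin N` admits an injection of `V` into `Fin N` under which all images of edges of `E`
receive the same color. -/
noncomputable def hypRamsey (q : ℕ) {V : Type} [Fintype V] [DecidableEq V]
    (E : Finset (Finset V)) : ℕ :=
  sInf {N : ℕ | ∀ χ : Finset (Fin N) → Fin q,
    ∃ f : V ↪ Fin N, ∃ c : Fin q, ∀ e ∈ E, χ (e.map f) = c}

/-!
Let `s = √m`. Coloring the vertices of `H` greedily in order of decreasing degree gives, with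
`r = O(ks)` colors, a coloring that is injective on every edge and whose color classes `V_1, …, V_r`
have sizes that are geometrically `O(1)` on average: `∏ (|V_j| + 1) ≤ 2 ^ O(r)`.

Take `M = tw_k(O(r))`, so that the Erdős–Rado bound gives a monochromatic clique on `r` vertices in
every coloring of the `k`-subsets of `[M]`, and color the `k`-subsets of `[M] × X`. Each transversal
`z : [M] → X` pulls this coloring back to `[M]` and so contains a monochromatic clique; by
pigeonhole, the same `r`-set `A` and the same color serve a proportion `1 / Q` of all `z`, where
`Q = M ^ r q`. Fixing the directions `i ∈ A` one at a time, greedy selection of common neighbors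
finds in this dense set a whole box, with sides of prescribed sizes `b_i` in the directions of `A`,
provided that `|X| ≥ Q ^ ∏ 4 b_i`. With `b_i = |V_i| + 1` the box hosts a monochromatic copy of `H`,
each vertex class being placed inside one side. Here `|X| = Q ^ (2 ^ O(r))` suffices, and as `k ≥ 3`
the extra factor `2 ^ O(r)` in the exponent is absorbed into `log Q = tw_{k-1}(O(r))`.
-/

open Finset Function

/-- The tower of `k` twos topped by `x`, in `ℕ`, so that it can serve as a cardinality. The index is
shifted against that of `tw`: `natTower k x = tw (k + 1) x`. -/
def natTower : ℕ → ℕ → ℕ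
  | 0, x => x
  | k + 1, x => 2 ^ natTower k x

theorem natTower_strictMono (k : ℕ) : StrictMono (natTower k) := by
  induction k with
  | zero => exact strictMono_id
  | succ k ih => exact (pow_right_strictMono₀ one_lt_two).comp ih

theorem natTower_pos (k : ℕ) {x : ℕ} (hx : 0 < x) : 0 < natTower k x :=
  hx.trans_le (natTower_strictMono k).le_apply

theorem mul_natTower_le (k p : ℕ) {x : ℕ} (hx : 0 < x) :
    p * natTower k x ≤ natTower k (p * x) := by
  induction k with
  | zero => exact le_rfl
  | succ k ih =>
    calc p * 2 ^ natTower k x = 2 ^ natTower k x * p := mul_comm _ _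
      _ ≤ (2 ^ natTower k x) ^ p :=
          Nat.mul_le_pow (Nat.one_lt_two_pow (natTower_pos k hx).ne').ne' p
      _ = 2 ^ (p * natTower k x) := by rw [← pow_mul, mul_comm]
      _ ≤ 2 ^ natTower k (p * x) := Nat.pow_le_pow_right two_pos ih

theorem natTower_pow_succ_le (k : ℕ) {x : ℕ} (hx : 0 < x) :
    natTower k x ^ (k + 1) ≤ natTower k ((k + 1) * x) := by
  cases k with
  | zero => simp only [zero_add, pow_one, one_mul, le_rfl]
  | succ k =>
    rw [natTower, ← pow_mul, mul_comm]
    exact Nat.pow_le_pow_right two_pos (mul_natTower_le k _ hx)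

theorem two_pow_mul_natTower_succ_le (k x y : ℕ) :
    2 ^ y * natTower (k + 1) x ≤ natTower (k + 1) (y + x) := by
  rw [natTower, ← pow_add]
  exact Nat.pow_le_pow_right two_pos ((natTower_strictMono k).add_le_nat y x)

theorem two_mul_pow_natTower_pow_le (q k : ℕ) {x : ℕ} (hx : 0 < x) :
    (2 * q ^ natTower k x ^ k) ^ natTower k x ≤ natTower (k + 1) ((q + 1) * ((k + 1) * x)) := by
  set t := natTower k x
  calc (2 * q ^ t ^ k) ^ t ≤ (2 * (2 ^ q) ^ t ^ k) ^ t := by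
        gcongr
        exact Nat.lt_two_pow_self.le
    _ = 2 ^ (t + q * t ^ (k + 1)) := by rw [← pow_mul, ← pow_succ', ← pow_mul]; ring
    _ ≤ 2 ^ ((q + 1) * t ^ (k + 1)) := by
        rw [add_one_mul, add_comm]
        gcongr
        · exact one_le_two
        · exact Nat.le_self_pow k.succ_ne_zero t
    _ ≤ 2 ^ ((q + 1) * natTower k ((k + 1) * x)) := by
        gcongr
        · exact one_le_two
        · exact natTower_pow_succ_le k hx
    _ ≤ natTower (k + 1) ((q + 1) * ((k + 1) * x)) :=
        Nat.pow_le_pow_right two_pos (mul_natTower_le k _ (by positivity))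

theorem tw_succ_natCast (k x : ℕ) : tw (k + 1) x = natTower k x := by
  induction k with
  | zero => rfl
  | succ k ih => rw [tw, ih, Real.rpow_natCast, natTower, Nat.cast_pow, Nat.cast_ofNat]

theorem tw_succ_mono (k : ℕ) : Monotone (tw (k + 1)) := by
  induction k with
  | zero => exact monotone_id
  | succ k ih => exact fun _ _ h => Real.rpow_le_rpow_of_exponent_le one_le_two (ih h)

theorem exists_card_le_card_mul_card_fiber {α β : Type*} [Fintype β] [Nonempty β] [DecidableEq β]
    (f : α → β) (s : Finset α) : ∃ y, #s ≤ Fintype.card β * #{x ∈ s | f x = y} := by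
  obtain ⟨y, -, hy⟩ := univ.exists_max_image (fun y => #{x ∈ s | f x = y}) univ_nonempty
  refine ⟨y, ?_⟩
  rw [← card_univ, mul_comm]
  exact card_le_mul_card_image_of_maps_to (fun x _ => mem_univ (f x)) _ hy

/-- Every `k`-element subset of `A` has color `c`. -/
def IsMonochromatic {α κ : Type*} (k : ℕ) (χ : Finset α → κ) (A : Finset α) (c : κ) : Prop :=
  ∀ e ⊆ A, #e = k → χ e = c

theorem exists_isMonochromatic_one {α κ : Type*} [Fintype κ] [Nonempty κ] (χ : Finset α → κ)
    {r : ℕ} {W : Finset α} (hW : Fintype.card κ * r ≤ #W) :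
    ∃ A ⊆ W, ∃ c, #A = r ∧ IsMonochromatic 1 χ A c := by
  classical
  obtain ⟨c, hc⟩ := exists_card_le_card_mul_card_fiber (fun x => χ {x}) W
  obtain ⟨A, hA, hAr⟩ :=
    exists_subset_card_eq (Nat.le_of_mul_le_mul_left (hW.trans hc) Fintype.card_pos)
  refine ⟨A, hA.trans (filter_subset _ W), c, hAr, fun e he hek => ?_⟩
  obtain ⟨x, rfl⟩ := card_eq_one.mp hek
  exact (mem_filter.mp (hA (singleton_subset_iff.mp he))).2

section ErdosRado

variable {α κ : Type*} [LinearOrder α] {χ : Finset α → κ} {A R : Finset α}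

/-- The state of the Erdős–Rado selection process: the points `A` have been selected, the points `R`
lying above them are still available, and the color of a `k`-subset of `A` extended by one larger
point of `A ∪ R` does not depend on that point. -/
structure EndHomogeneous (k : ℕ) (χ : Finset α → κ) (A R : Finset α) : Prop where
  lt : ∀ a ∈ A, ∀ c ∈ R, a < c
  color_eq : ∀ S ⊆ A, #S = k → ∀ c ∈ A ∪ R, (∀ s ∈ S, s < c) → ∀ c' ∈ R,
    χ (insert c S) = χ (insert c' S)

theorem EndHomogeneous.insert_of_subset {k : ℕ} (h : EndHomogeneous (k + 1) χ A R) {a : α}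
    (ha : a ∈ R) {R' : Finset α} (hR' : R' ⊆ R) (hlt : ∀ c ∈ R', a < c)
    (hcolor : ∀ S ⊆ A, #S = k → ∀ c ∈ R', ∀ c' ∈ R',
      χ (insert c (insert a S)) = χ (insert c' (insert a S))) :
    EndHomogeneous (k + 1) χ (insert a A) R' where
  lt b hb c hc := (mem_insert.mp hb).elim (fun hba => hba ▸ hlt c hc) (h.lt b · c (hR' hc))
  color_eq S hS hSk c hc hSc c' hc' := by
    by_cases haS : a ∈ S
    · have hcR' : c ∈ R' := by
        have hac := hSc a haS
        rcases mem_union.mp hc with hc | hc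
        · rcases mem_insert.mp hc with rfl | hcA
          · exact absurd hac (lt_irrefl _)
          · exact absurd (h.lt c hcA a ha) hac.asymm
        · exact hc
      have hSk' : #(S.erase a) = k := by rw [card_erase_of_mem haS, hSk, Nat.add_sub_cancel]
      simpa only [insert_erase haS] using
        hcolor (S.erase a) (subset_insert_iff.mp hS) hSk' c hcR' c' hc'
    · refine h.color_eq S ((subset_insert_iff_of_notMem haS).mp hS) hSk c ?_ hSc c' (hR' hc')
      rcases mem_union.mp hc with hc | hc
      · rcases mem_insert.mp hc with rfl | hcA
        · exact mem_union_right _ ha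
        · exact mem_union_left _ hcA
      · exact mem_union_right _ (hR' hc)

theorem EndHomogeneous.exists_insert [Fintype κ] [Nonempty κ] {k : ℕ}
    (h : EndHomogeneous (k + 1) χ A R) (hR : R.Nonempty) :
    ∃ a ∈ R, a ∉ A ∧ ∃ R' ⊆ R, EndHomogeneous (k + 1) χ (insert a A) R' ∧
      #R ≤ Fintype.card κ ^ #A ^ k * #R' + 1 := by
  classical
  set a := R.min' hR
  have ha : a ∈ R := R.min'_mem hR
  let pattern (c : α) (S : A.powersetCard k) : κ := χ (insert c (insert a S.1))
  obtain ⟨y, hy⟩ := exists_card_le_card_mul_card_fiber pattern (R.erase a)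
  have hR' : {c ∈ R.erase a | pattern c = y} ⊆ R := (filter_subset _ _).trans (erase_subset a R)
  refine ⟨a, ha, fun haA => lt_irrefl a (h.lt a haA a ha), {c ∈ R.erase a | pattern c = y}, hR',
    h.insert_of_subset ha hR' ?_ ?_, ?_⟩
  · intro c hc
    exact R.min'_lt_of_mem_erase_min' hR (mem_of_mem_filter c hc)
  · intro S hSA hSk c hc c' hc'
    exact congrFun ((mem_filter.mp hc).2.trans (mem_filter.mp hc').2.symm)
      ⟨S, mem_powersetCard.mpr ⟨hSA, hSk⟩⟩
  · rw [Fintype.card_fun, Fintype.card_coe, card_powersetCard] at hy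
    rw [← card_erase_add_one ha]
    gcongr
    exact hy.trans (Nat.mul_le_mul_right _
      (Nat.pow_le_pow_right Fintype.card_pos (Nat.choose_le_pow _ k)))

theorem exists_endHomogeneous [Fintype κ] [Nonempty κ] (χ : Finset α → κ) {k t P : ℕ}
    (hP : 2 * Fintype.card κ ^ t ^ k ≤ P) {W : Finset α} {n j : ℕ} (hn : n ≤ t)
    (hW : P ^ (n + j) ≤ #W) :
    ∃ A ⊆ W, ∃ R ⊆ W, EndHomogeneous (k + 1) χ A R ∧ #A = n ∧ P ^ j ≤ #R := by
  induction n generalizing j with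
  | zero =>
    refine ⟨∅, empty_subset W, W, subset_rfl, ⟨by simp, fun S hS hSk => ?_⟩, card_empty,
      by simpa only [zero_add] using hW⟩
    simp [subset_empty.mp hS] at hSk
  | succ n ih =>
    obtain ⟨A, hAW, R, hRW, h, hAn, hR⟩ :=
      ih (j := j + 1) (by omega) (by rwa [← add_assoc, add_right_comm])
    have hpow : 1 ≤ Fintype.card κ ^ t ^ k := Nat.one_le_pow _ _ Fintype.card_pos
    have hRne : R.Nonempty := card_pos.mp ((Nat.pow_pos (by omega)).trans_le hR)
    obtain ⟨a, ha, haA, R', hR'R, h', hcard⟩ := h.exists_insert hRne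
    refine ⟨insert a A, insert_subset (hRW ha) hAW, R', hR'R.trans hRW, h',
      by rw [card_insert_of_notMem haA, hAn], ?_⟩
    by_contra! hlt
    have hnt : #A ^ k ≤ t ^ k := Nat.pow_le_pow_left (by omega) k
    have : P ^ (j + 1) < P ^ (j + 1) := by
      calc P ^ (j + 1) ≤ Fintype.card κ ^ t ^ k * #R' + 1 := by
            refine (hR.trans hcard).trans ?_
            gcongr
            exact Fintype.card_pos
        _ < 2 * Fintype.card κ ^ t ^ k * P ^ j := by nlinarith
        _ ≤ P ^ (j + 1) := by
            rw [pow_succ']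
            gcongr
    exact this.false

theorem EndHomogeneous.isMonochromatic {k : ℕ} (h : EndHomogeneous k χ A R) {c₀ : α} (hc₀ : c₀ ∈ R)
    {B : Finset α} (hBA : B ⊆ A) {c : κ} (hB : IsMonochromatic k (fun S => χ (insert c₀ S)) B c) :
    IsMonochromatic (k + 1) χ B c := by
  intro e heB hek
  have hne : e.Nonempty := card_pos.mp (by omega)
  set b := e.max' hne
  have hbe : b ∈ e := e.max'_mem hne
  have hSB : e.erase b ⊆ B := (erase_subset b e).trans heB
  have hSk : #(e.erase b) = k := by rw [card_erase_of_mem hbe, hek, Nat.add_sub_cancel]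
  calc χ e = χ (insert b (e.erase b)) := by rw [insert_erase hbe]
    _ = χ (insert c₀ (e.erase b)) :=
        h.color_eq _ (hSB.trans hBA) hSk b (mem_union_left R (hBA (heB hbe)))
          (fun s hs => e.lt_max'_of_mem_erase_max' hne hs) c₀ hc₀
    _ = c := hB _ hSB hSk

end ErdosRado

theorem exists_isMonochromatic_of_natTower_le.{u} (κ : Type*) [Finite κ] [Nonempty κ] (k : ℕ) :
    ∃ C, 0 < C ∧ ∀ r, 0 < r → ∀ (α : Type u) [LinearOrder α] (W : Finset α) (χ : Finset α → κ),
      natTower k (C * r) ≤ #W → ∃ A ⊆ W, ∃ c, #A = r ∧ IsMonochromatic (k + 1) χ A c := by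
  have := Fintype.ofFinite κ
  induction k with
  | zero => exact ⟨_, Fintype.card_pos, fun r _ α _ W χ hW => exists_isMonochromatic_one χ hW⟩
  | succ k ih =>
    obtain ⟨C, hC, hclique⟩ := ih
    refine ⟨(Fintype.card κ + 1) * ((k + 1) * C), by positivity, fun r hr α _ W χ hW => ?_⟩
    rw [mul_assoc, mul_assoc] at hW
    obtain ⟨A, hAW, R, -, h, hA, hR⟩ := exists_endHomogeneous χ (j := 0) le_rfl le_rfl
      ((two_mul_pow_natTower_pow_le (Fintype.card κ) k (Nat.mul_pos hC hr)).trans hW)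
    obtain ⟨c₀, hc₀⟩ : R.Nonempty := card_pos.mp (by rwa [pow_zero] at hR)
    obtain ⟨B, hBA, c, hB, hmono⟩ := hclique r hr α A (fun S => χ (insert c₀ S)) hA.ge
    exact ⟨B, hBA.trans hAW, c, hB, h.isMonochromatic hc₀ hBA hmono⟩

section CommonNeighbors

variable {X Z : Type*}

theorem exists_card_le_mul_card_filter (r : X → Z → Prop) [DecidableRel r] {S : Finset X}
    {Y : Finset Z} {P : ℕ} (hS : S.Nonempty) (hdeg : ∀ z ∈ Y, #S ≤ P * #{u ∈ S | r u z}) :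
    ∃ u ∈ S, #Y ≤ P * #{z ∈ Y | r u z} := by
  obtain ⟨u, hu, hmax⟩ := S.exists_max_image (fun u => #{z ∈ Y | r u z}) hS
  refine ⟨u, hu, Nat.le_of_mul_le_mul_right ?_ hS.card_pos⟩
  calc #Y * #S ≤ ∑ z ∈ Y, P * #{u ∈ S | r u z} := card_nsmul_le_sum _ _ _ hdeg
    _ = P * ∑ u ∈ S, #{z ∈ Y | r u z} := by
        rw [← mul_sum]
        congr 1
        exact (sum_card_bipartiteAbove_eq_sum_card_bipartiteBelow r).symm
    _ ≤ P * (#S * #{z ∈ Y | r u z}) := by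
        gcongr
        exact sum_le_card_nsmul _ _ _ hmax
    _ = P * #{z ∈ Y | r u z} * #S := by ring

variable [Fintype X] [Nonempty X]

/-- Greedy selection: each new point of `B` is one adjacent to most of the vertices still alive. -/
theorem exists_card_le_pow_mul_card_commonNeighbors [DecidableEq X] (r : X → Z → Prop)
    [DecidableRel r] {Y : Finset Z} (hY : Y.Nonempty) {b P : ℕ}
    (hdeg : ∀ z ∈ Y, Fintype.card X + P * b ≤ P * #{u | r u z}) :
    ∃ B : Finset X, #B = b ∧ #Y ≤ P ^ b * #{z ∈ Y | ∀ u ∈ B, r u z} := by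
  induction b with
  | zero => exact ⟨∅, by simp⟩
  | succ b ih =>
    obtain ⟨B, hB, hYB⟩ := ih fun z hz => le_trans (by gcongr; omega) (hdeg z hz)
    set YB := {z ∈ Y | ∀ u ∈ B, r u z}
    have hout : ∀ z ∈ YB, Fintype.card X ≤ P * #{u ∈ Bᶜ | r u z} := fun z hz => by
      have hsplit : #{u | r u z} ≤ #{u ∈ Bᶜ | r u z} + b := by
        rw [← hB]
        refine (card_le_card fun u hu => ?_).trans (card_union_le _ B)
        simp only [mem_filter, mem_univ, true_and, mem_union, mem_compl] at hu ⊢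
        tauto
      have := hdeg z (mem_of_mem_filter z hz)
      nlinarith [Nat.mul_le_mul_left P hsplit]
    have hBc : Bᶜ.Nonempty := by
      obtain ⟨z, hz⟩ := hY
      have hlt : P * (b + 1) < P * Fintype.card X := by
        calc P * (b + 1) < Fintype.card X + P * (b + 1) := Nat.lt_add_of_pos_left Fintype.card_pos
          _ ≤ P * #{u | r u z} := hdeg z hz
          _ ≤ P * Fintype.card X := Nat.mul_le_mul_left P (card_le_univ _)
      rw [← card_pos, card_compl, hB]
      have := Nat.lt_of_mul_lt_mul_left hlt
      omega
    obtain ⟨u, hu, hstep⟩ := exists_card_le_mul_card_filter r hBc fun z hz =>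
      (card_le_univ Bᶜ).trans (hout z hz)
    refine ⟨insert u B, by rw [card_insert_of_notMem (mem_compl.mp hu), hB], ?_⟩
    calc #Y ≤ P ^ b * (P * #{z ∈ YB | r u z}) := hYB.trans (Nat.mul_le_mul_left _ hstep)
      _ = P ^ (b + 1) * #{z ∈ Y | ∀ v ∈ insert u B, r v z} := by
          simp only [YB, filter_filter, forall_mem_insert, and_comm]
          ring

theorem card_le_mul_card_filter_card_le [Fintype Z] (r : X → Z → Prop) [DecidableRel r] {Q : ℕ}
    (hr : Fintype.card X * Fintype.card Z ≤ Q * ∑ z, #{u | r u z}) :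
    Fintype.card Z ≤ 2 * Q * #{z | Fintype.card X ≤ 2 * Q * #{u | r u z}} := by
  have := Classical.decEq Z
  set Y : Finset Z := {z | Fintype.card X ≤ 2 * Q * #{u | r u z}}
  have hsum : ∑ z, 2 * Q * #{u | r u z} ≤
      2 * Q * Fintype.card X * #Y + Fintype.card X * Fintype.card Z := by
    calc ∑ z, 2 * Q * #{u | r u z}
        ≤ ∑ z, ((if z ∈ Y then 2 * Q * Fintype.card X else 0) + Fintype.card X) := by
          refine sum_le_sum fun z _ => ?_
          split_ifs with hz
          · exact le_add_right (Nat.mul_le_mul_left _ (card_le_univ _))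
          · rw [zero_add]
            exact (not_le.mp fun h => hz (mem_filter.mpr ⟨mem_univ z, h⟩)).le
      _ = 2 * Q * Fintype.card X * #Y + Fintype.card X * Fintype.card Z := by
          rw [sum_add_distrib, sum_ite_mem, univ_inter, sum_const, sum_const, card_univ,
            smul_eq_mul, smul_eq_mul, mul_comm, mul_comm (Fintype.card Z)]
  rw [← mul_sum] at hsum
  refine Nat.le_of_mul_le_mul_left ?_ (Fintype.card_pos (α := X))
  linarith

theorem exists_dense_commonNeighbors [DecidableEq X] [Fintype Z] [Nonempty Z] (r : X → Z → Prop)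
    [DecidableRel r] {b Q : ℕ} (hbX : 4 * Q * b ≤ Fintype.card X)
    (hr : Fintype.card X * Fintype.card Z ≤ Q * ∑ z, #{u | r u z}) :
    ∃ B : Finset X, #B = b ∧
      Fintype.card Z ≤ 2 * Q * (4 * Q) ^ b * #{z | ∀ u ∈ B, r u z} := by
  have hY := card_le_mul_card_filter_card_le r hr
  set Y : Finset Z := {z | Fintype.card X ≤ 2 * Q * #{u | r u z}}
  obtain ⟨B, hB, hYB⟩ := exists_card_le_pow_mul_card_commonNeighbors r (Y := Y) (b := b)
    (P := 4 * Q) (card_pos.mp (Nat.pos_of_mul_pos_left (Fintype.card_pos.trans_le hY)))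
    fun z hz => by
      have := (mem_filter.mp hz).2
      linarith
  refine ⟨B, hB, ?_⟩
  calc Fintype.card Z ≤ 2 * Q * ((4 * Q) ^ b * #{z ∈ Y | ∀ u ∈ B, r u z}) :=
        hY.trans (Nat.mul_le_mul_left _ hYB)
    _ ≤ 2 * Q * ((4 * Q) ^ b * #{z | ∀ u ∈ B, r u z}) := by
        gcongr
        exact subset_univ Y
    _ = 2 * Q * (4 * Q) ^ b * #{z | ∀ u ∈ B, r u z} := by ring

end CommonNeighbors

section Boxes

variable {ι X : Type*} [Fintype ι] [DecidableEq ι] [Fintype X] [DecidableEq X]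

theorem sum_card_update_mem (a : ι) (G : Finset (ι → X)) :
    ∑ z : ι → X, #{u | update z a u ∈ G} = Fintype.card X * #G := by
  calc ∑ z : ι → X, #{u | update z a u ∈ G} = #{p : (ι → X) × X | update p.1 a p.2 ∈ G} := by
        simp_rw [card_filter, Fintype.sum_prod_type]
    _ = #(G ×ˢ (univ : Finset X)) := by
        let swap (p : (ι → X) × X) : (ι → X) × X := (update p.1 a p.2, p.1 a)
        refine card_nbij' swap swap ?_ ?_ ?_ ?_ <;> intro p hp <;> simp_all [swap]
    _ = Fintype.card X * #G := by rw [card_product, card_univ, mul_comm]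

/-- The points `z` for which `T` contains the whole box obtained from `z` by letting the coordinates
`i ∈ S` range over `B i`. -/
def boxBases (S : Finset ι) (B : ι → Finset X) (T : Finset (ι → X)) : Finset (ι → X) :=
  {z | ∀ w, (∀ i ∈ S, w i ∈ B i) → S.piecewise w z ∈ T}

theorem mem_boxBases {S : Finset ι} {B : ι → Finset X} {T : Finset (ι → X)} {z : ι → X} :
    z ∈ boxBases S B T ↔ ∀ w, (∀ i ∈ S, w i ∈ B i) → S.piecewise w z ∈ T := by
  simp only [boxBases, mem_filter, mem_univ, true_and]

theorem mem_boxBases_insert {S : Finset ι} {B : ι → Finset X} {T : Finset (ι → X)} {a : ι}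
    (ha : a ∉ S) {Y : Finset X} {z : ι → X} (hz : ∀ u ∈ Y, update z a u ∈ boxBases S B T) :
    z ∈ boxBases (insert a S) (update B a Y) T := by
  refine mem_boxBases.mpr fun w hw => ?_
  rw [forall_mem_insert, update_self] at hw
  rw [piecewise_insert, update_piecewise_of_notMem _ _ _ ha]
  refine mem_boxBases.mp (hz (w a) hw.1) w fun i hi => ?_
  simpa only [update_of_ne (ne_of_mem_of_not_mem hi ha)] using hw.2 i hi

theorem two_mul_mul_four_mul_pow_le {R b : ℕ} (hR : 4 ≤ R) (hb : 1 ≤ b) :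
    2 * R * (4 * R) ^ b ≤ R ^ (4 * b) := by
  calc 2 * R * (4 * R) ^ b ≤ R * R * (R * R) ^ b := by gcongr; omega
    _ = R ^ (2 * b + 2) := by rw [← pow_succ', ← sq, ← pow_mul]; ring
    _ ≤ R ^ (4 * b) := Nat.pow_le_pow_right (by omega) (by omega)

theorem exists_dense_boxBases (S : Finset ι) {b : ι → ℕ} {Q : ℕ} (hb : ∀ i, 1 ≤ b i) (hQ : 4 ≤ Q)
    (T : Finset (ι → X)) (hT : Fintype.card (ι → X) ≤ Q * #T)
    (hX : Q ^ (∏ i ∈ S, 4 * b i) ≤ Fintype.card X) :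
    ∃ B : ι → Finset X, (∀ i ∈ S, #(B i) = b i) ∧
      Fintype.card (ι → X) ≤ Q ^ (∏ i ∈ S, 4 * b i) * #(boxBases S B T) := by
  have : Nonempty X := Fintype.card_pos_iff.mp ((Nat.pow_pos (by omega)).trans_le hX)
  induction S using Finset.induction_on with
  | empty =>
    refine ⟨fun _ => ∅, by simp, ?_⟩
    simpa [boxBases] using hT
  | insert a S ha ih =>
    have hexp : Q ^ (∏ i ∈ insert a S, 4 * b i) = (Q ^ (∏ i ∈ S, 4 * b i)) ^ (4 * b a) := by
      rw [prod_insert ha, mul_comm, pow_mul]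
    rw [hexp] at hX ⊢
    set R := Q ^ (∏ i ∈ S, 4 * b i)
    have hR : 4 ≤ R := by
      refine hQ.trans (Nat.le_self_pow (prod_ne_zero_iff.mpr fun i _ => ?_) Q)
      exact Nat.mul_ne_zero four_ne_zero (Nat.one_le_iff_ne_zero.mp (hb i))
    obtain ⟨B, hB, hBT⟩ := ih ((Nat.le_self_pow (by have := hb a; omega) R).trans hX)
    have hRX : 4 * R * b a ≤ Fintype.card X := by
      calc 4 * R * b a = R * (4 * b a) := by ring
        _ ≤ R ^ (4 * b a) := Nat.mul_le_pow (by omega) _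
        _ ≤ Fintype.card X := hX
    obtain ⟨Y, hY, hYT⟩ := exists_dense_commonNeighbors
      (fun u (z : ι → X) => update z a u ∈ boxBases S B T) hRX (by
        rw [sum_card_update_mem, mul_left_comm]
        exact Nat.mul_le_mul_left _ hBT)
    refine ⟨update B a Y, forall_mem_insert a S _ |>.mpr ⟨?_, fun i hi => ?_⟩, ?_⟩
    · rw [update_self, hY]
    · rw [update_of_ne (ne_of_mem_of_not_mem hi ha), hB i hi]
    · calc Fintype.card (ι → X) ≤ _ := hYT
        _ ≤ R ^ (4 * b a) * #(boxBases (insert a S) (update B a Y) T) :=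
            Nat.mul_le_mul (two_mul_mul_four_mul_pow_le hR (hb a)) (card_le_card fun z hz =>
              mem_boxBases_insert ha (mem_filter.mp hz).2)

end Boxes

section BlowUp

variable {ι X V κ : Type*}

theorem exists_dense_transversals [Fintype ι] [DecidableEq ι] [Fintype X] [DecidableEq X]
    [Fintype κ] {k r : ℕ}
    (hclique : ∀ χ : Finset ι → κ, ∃ A c, #A = r ∧ IsMonochromatic k χ A c)
    (χ : Finset (ι × X) → κ) :
    ∃ A c, ∃ T : Finset (ι → X), #A = r ∧
      Fintype.card (ι → X) ≤ Fintype.card ι ^ r * Fintype.card κ * #T ∧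
      ∀ z ∈ T, IsMonochromatic k (fun e => χ (e.image fun i => (i, z i))) A c := by
  classical
  have : Nonempty ({A : Finset ι // #A = r} × κ) :=
    let ⟨A, c, hA, _⟩ := hclique fun _ => χ ∅
    ⟨⟨A, hA⟩, c⟩
  choose A c hA hmono using fun z : ι → X => hclique fun e => χ (e.image fun i => (i, z i))
  obtain ⟨⟨⟨A₀, hA₀⟩, c₀⟩, hcard⟩ := exists_card_le_card_mul_card_fiber
    (fun z => ((⟨A z, hA z⟩, c z) : {A : Finset ι // #A = r} × κ)) univ
  simp only [Prod.mk.injEq, Subtype.mk.injEq, card_univ, Fintype.card_prod,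
    Fintype.card_finset_len] at hcard
  refine ⟨A₀, c₀, ({z | A z = A₀ ∧ c z = c₀} : Finset _), hA₀, hcard.trans ?_, fun z hz => ?_⟩
  · gcongr
    exact Nat.choose_le_pow _ r
  · obtain ⟨-, rfl, rfl⟩ := mem_filter.mp hz
    exact hmono z

theorem exists_injective_prodMk_of_card_fiber_le [DecidableEq ι] [Fintype V] (slot : V → ι)
    (B : ι → Finset X) (hB : ∀ i, #{v | slot v = i} ≤ #(B i)) :
    ∃ φ : V → X, (∀ v, φ v ∈ B (slot v)) ∧ Injective fun v => (slot v, φ v) := by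
  have hψ (i : ι) : Nonempty ({v // slot v = i} ↪ B i) :=
    Embedding.nonempty_of_card_le (by rw [Fintype.card_subtype, Fintype.card_coe]; exact hB i)
  let ψ (i : ι) := (hψ i).some
  refine ⟨fun v => ψ (slot v) ⟨v, rfl⟩, fun v => Subtype.coe_prop _, fun u v huv => ?_⟩
  obtain ⟨hslot, hφ⟩ := Prod.mk.inj huv
  have hψv : ∀ i (hi : slot v = i), (ψ (slot v) ⟨v, rfl⟩ : X) = ψ i ⟨v, hi⟩ := by
    rintro _ rfl
    rfl
  exact congrArg Subtype.val
    ((ψ (slot u)).injective (Subtype.ext (hφ.trans (hψv (slot u) hslot.symm))))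

variable [Fintype ι] [Fintype X] [Fintype V] {E : Finset (Finset V)} {k : ℕ}

theorem exists_embedding_of_mem_boxBases [DecidableEq ι] [DecidableEq X] (hE : ∀ e ∈ E, #e = k)
    {slot : V → ι} (hinj : ∀ e ∈ E, Set.InjOn slot e) {χ : Finset (ι × X) → κ} {A : Finset ι}
    (hA : ∀ v, slot v ∈ A) {B : ι → Finset X} (hB : ∀ i ∈ A, #{v | slot v = i} < #(B i))
    {T : Finset (ι → X)} {c : κ}
    (hT : ∀ z ∈ T, IsMonochromatic k (fun e => χ (e.image fun i => (i, z i))) A c) {z : ι → X}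
    (hz : z ∈ boxBases A B T) : ∃ f : V ↪ ι × X, ∀ e ∈ E, χ (e.map f) = c := by
  obtain ⟨φ, hφB, hφ⟩ := exists_injective_prodMk_of_card_fiber_le slot B fun i => by
    by_cases hi : i ∈ A
    · exact (hB i hi).le
    · rw [filter_false_of_mem (by rintro v - rfl; exact hi (hA v)), card_empty]
      exact Nat.zero_le _
  refine ⟨⟨_, hφ⟩, fun e he => ?_⟩
  have hw : ∀ i, ∃ x, (i ∈ A → x ∈ B i) ∧ ∀ v ∈ e, slot v = i → x = φ v := fun i => by
    by_cases h : ∃ v ∈ e, slot v = i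
    · obtain ⟨v, hv, rfl⟩ := h
      exact ⟨φ v, fun _ => hφB v, fun u hu huv => by rw [hinj e he hu hv huv]⟩
    · by_cases hi : i ∈ A
      · obtain ⟨x, hx⟩ := card_pos.mp (Nat.zero_lt_of_lt (hB i hi))
        exact ⟨x, fun _ => hx, fun v hv hvi => absurd ⟨v, hv, hvi⟩ h⟩
      · exact ⟨z i, fun hi' => absurd hi' hi, fun v hv hvi => absurd ⟨v, hv, hvi⟩ h⟩
  choose w hwB hwφ using hw
  have himage : e.map ⟨_, hφ⟩ = (e.image slot).image fun i => (i, A.piecewise w z i) := by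
    rw [map_eq_image, image_image]
    refine image_congr fun v hv => ?_
    simp only [Embedding.coeFn_mk, comp_apply, piecewise_eq_of_mem A w z (hA v),
      hwφ (slot v) v hv rfl]
  rw [himage]
  refine hT _ (mem_boxBases.mp hz w hwB) _ (image_subset_iff.mpr fun v _ => hA v) ?_
  rw [card_image_of_injOn (hinj e he), hE e he]

theorem exists_embedding_prod_of_clique [Fintype κ] (hE : ∀ e ∈ E, #e = k) {r : ℕ}
    {slot : V → Fin r} (hinj : ∀ e ∈ E, Set.InjOn slot e)
    (hclique : ∀ χ : Finset ι → κ, ∃ A c, #A = r ∧ IsMonochromatic k χ A c) {Q : ℕ} (hQ : 4 ≤ Q)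
    (hιQ : Fintype.card ι ^ r * Fintype.card κ ≤ Q)
    (hX : Q ^ (∏ x, 4 * (#{v | slot v = x} + 1)) ≤ Fintype.card X) (χ : Finset (ι × X) → κ) :
    ∃ f : V ↪ ι × X, ∃ c, ∀ e ∈ E, χ (e.map f) = c := by
  classical
  obtain ⟨A, c, T, hA, hTcard, hT⟩ := exists_dense_transversals hclique χ
  let g : Fin r ≃ A := (A.equivFinOfCardEq hA).symm
  have hprod : ∏ i ∈ A, 4 * (#{v | (g (slot v) : ι) = i} + 1) =
      ∏ x, 4 * (#{v | slot v = x} + 1) := by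
    rw [← prod_coe_sort, ← g.prod_comp]
    simp only [SetLike.coe_eq_coe, EmbeddingLike.apply_eq_iff_eq]
  rw [← hprod] at hX
  obtain ⟨B, hB, hbases⟩ := exists_dense_boxBases A (fun i => Nat.le_add_left 1 _) hQ T
    (hTcard.trans (Nat.mul_le_mul_right _ hιQ)) hX
  have : Nonempty X := Fintype.card_pos_iff.mp ((Nat.pow_pos (by omega)).trans_le hX)
  obtain ⟨z, hz⟩ := card_pos.mp (Nat.pos_of_mul_pos_left (Fintype.card_pos.trans_le hbases))
  obtain ⟨f, hf⟩ := exists_embedding_of_mem_boxBases hE (slot := fun v => (g (slot v) : ι))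
    (fun e he => (Subtype.val_injective.comp g.injective).comp_injOn (hinj e he))
    (fun v => (g (slot v)).2) (fun i hi => (Nat.lt_succ_self _).trans_eq (hB i hi).symm) hT hz
  exact ⟨f, c, hf⟩

end BlowUp

theorem exists_lt_card_filter_eq_lt {α : Type*} (N U : Finset α) (c : α → ℕ) {J m : ℕ}
    (hm : 0 < m) (hJ : #N + #U / m < J) : ∃ j < J, (∀ v ∈ N, c v ≠ j) ∧ #{v ∈ U | c v = j} < m := by
  set full := {j ∈ range J | m ≤ #{v ∈ U | c v = j}}
  have hfull : #full ≤ #U / m := by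
    rw [Nat.le_div_iff_mul_le hm]
    calc #full * m ≤ ∑ j ∈ full, #{v ∈ U | c v = j} :=
          card_nsmul_le_sum _ _ _ fun j hj => (mem_filter.mp hj).2
      _ = #{v ∈ U | c v ∈ full} := sum_card_fiberwise_eq_card_filter _ _ _
      _ ≤ #U := card_filter_le _ _
  have hlt : #(N.image c ∪ full) < #(range J) := by
    rw [card_range]
    exact ((card_union_le _ _).trans (Nat.add_le_add card_image_le hfull)).trans_lt hJ
  obtain ⟨j, hj, hjN⟩ := exists_mem_notMem_of_card_lt_card hlt
  rw [notMem_union] at hjN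
  exact ⟨j, mem_range.mp hj, fun v hv hvj => hjN.1 (hvj ▸ mem_image_of_mem c hv),
    not_le.mp fun h => hjN.2 (mem_filter.mpr ⟨hj, h⟩)⟩

theorem div_sq_div_le {n d k s : ℕ} (hd : 0 < d) (hds : d ≤ s) (hn : n * d ≤ k * s ^ 2) :
    n / (s / d) ^ 2 ≤ 4 * (k * d) := by
  have hs : s ≤ 2 * d * (s / d) := by
    have := Nat.lt_mul_div_succ s hd
    have := Nat.div_pos hds hd
    nlinarith
  refine Nat.div_le_of_le_mul (Nat.le_of_mul_le_mul_right ?_ hd)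
  calc n * d ≤ k * (2 * d * (s / d)) ^ 2 := hn.trans (by gcongr)
    _ = (s / d) ^ 2 * (4 * (k * d)) * d := by ring

theorem prod_range_div_succ_le (r : ℕ) : ∏ j ∈ range r, r / (j + 1) ≤ 4 ^ r := by
  refine Nat.le_of_mul_le_mul_right ?_ r.factorial_pos
  calc (∏ j ∈ range r, r / (j + 1)) * r.factorial
      = ∏ j ∈ range r, r / (j + 1) * (j + 1) := by
        rw [prod_mul_distrib, prod_range_add_one_eq_factorial]
    _ ≤ ∏ _j ∈ range r, r := prod_le_prod' fun j _ => Nat.div_mul_le_self r (j + 1)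
    _ ≤ (r + 1).ascFactorial r := by
        rw [prod_const, card_range]
        exact (Nat.pow_le_pow_left r.le_succ r).trans (Nat.pow_succ_le_ascFactorial (r + 1) r)
    _ = r.factorial * (r + r).choose r := Nat.ascFactorial_eq_factorial_mul_choose r r
    _ ≤ r.factorial * 2 ^ (r + r) := Nat.mul_le_mul_left _ (Nat.choose_le_two_pow _ _)
    _ = 4 ^ r * r.factorial := by rw [← two_mul, pow_mul, mul_comm]; norm_num

section StrongColoring

variable {V : Type*} [DecidableEq V] {E : Finset (Finset V)} {U : Finset V} {k s : ℕ}

/-- The number of edges of `E` through `v`. -/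
def edgeDegree (E : Finset (Finset V)) (v : V) : ℕ := #{e ∈ E | v ∈ e}

/-- The union of the edges of `E` through `v`. -/
def closedNeighborhood (E : Finset (Finset V)) (v : V) : Finset V := {e ∈ E | v ∈ e}.biUnion id

theorem card_closedNeighborhood_le (hE : ∀ e ∈ E, #e ≤ k) (v : V) :
    #(closedNeighborhood E v) ≤ edgeDegree E v * k :=
  card_biUnion_le_card_mul _ _ _ fun e he => hE e (mem_of_mem_filter e he)

theorem card_mul_le_of_le_edgeDegree (hE : ∀ e ∈ E, #e ≤ k) {d : ℕ}
    (hU : ∀ u ∈ U, d ≤ edgeDegree E u) : #U * d ≤ k * #E := by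
  calc #U * d ≤ ∑ e ∈ E, #(U ∩ e) := le_sum_card_inter hU
    _ ≤ #E * k := sum_le_card_nsmul _ _ _ fun e he =>
        (card_le_card inter_subset_right).trans (hE e he)
    _ = k * #E := mul_comm _ _

/-- A coloring of the vertices `U` with the colors `0, …, r - 1` such that no edge of `E` contains
two vertices of the same color, and such that color `j` is used at most `cap j` times. -/
structure IsCappedStrongColoring (E : Finset (Finset V)) (r : ℕ) (cap : ℕ → ℕ) (U : Finset V)
    (c : V → ℕ) : Prop where
  lt : ∀ v ∈ U, c v < r
  injOn : ∀ e ∈ E, Set.InjOn c ↑(e ∩ U)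
  card_le : ∀ j, #{v ∈ U | c v = j} ≤ cap j

theorem IsCappedStrongColoring.insert {r : ℕ} {cap : ℕ → ℕ} {c : V → ℕ}
    (h : IsCappedStrongColoring E r cap U c) {w : V} (hw : w ∉ U) {j : ℕ} (hj : j < r)
    (hne : ∀ v ∈ closedNeighborhood E w ∩ U, c v ≠ j) (hcap : #{v ∈ U | c v = j} < cap j) :
    IsCappedStrongColoring E r cap (insert w U) (update c w j) := by
  have hc : ∀ v ∈ U, update c w j v = c v := fun v hv =>
    update_of_ne (ne_of_mem_of_not_mem hv hw) _ _
  refine ⟨?_, fun e he => ?_, fun i => ?_⟩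
  · rw [forall_mem_insert, update_self]
    exact ⟨hj, fun v hv => (hc v hv).trans_lt (h.lt v hv)⟩
  · have hcol : Set.InjOn (update c w j) ↑(e ∩ U) :=
      (h.injOn e he).congr fun v hv => (hc v (mem_of_mem_inter_right hv)).symm
    by_cases hwe : w ∈ e
    · rw [inter_insert_of_mem hwe, coe_insert, Set.injOn_insert (by simp [hw])]
      refine ⟨hcol, ?_⟩
      rintro ⟨v, hv, hvj⟩
      rw [hc v (mem_of_mem_inter_right hv), update_self] at hvj
      exact hne v (inter_subset_inter_right
        (subset_biUnion_of_mem id (mem_filter.mpr ⟨he, hwe⟩)) hv) hvj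
    · rwa [inter_insert_of_notMem hwe]
  · rw [filter_insert, filter_congr fun v hv => by rw [hc v hv], update_self]
    split_ifs with hij
    · subst hij
      exact (card_insert_le _ _).trans hcap
    · exact h.card_le i

theorem exists_free_color (hk : 0 < k) (hE : ∀ e ∈ E, #e ≤ k) (hs : 0 < s) (hm : #E ≤ s ^ 2)
    {w : V} (hw : 0 < edgeDegree E w) (hU : ∀ u ∈ U, edgeDegree E w ≤ edgeDegree E u)
    (c : V → ℕ) :
    ∃ j < 6 * k * s, (∀ v ∈ closedNeighborhood E w ∩ U, c v ≠ j) ∧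
      #{v ∈ U | c v = j} < (6 * k * s / (j + 1)) ^ 2 := by
  set d := edgeDegree E w
  have hUd : #U * d ≤ k * s ^ 2 :=
    (card_mul_le_of_le_edgeDegree hE hU).trans (Nat.mul_le_mul_left k hm)
  rcases le_or_gt s d with hsd | hds
  · have hUks : #U ≤ k * s := Nat.le_of_mul_le_mul_right (by nlinarith) hs
    have hks : 0 < k * s := Nat.mul_pos hk hs
    obtain ⟨j, hj, hne, hcard⟩ := exists_lt_card_filter_eq_lt U U c one_pos
      (J := 6 * k * s) (by rw [Nat.div_one]; linarith)
    exact ⟨j, hj, fun v hv => hne v (mem_of_mem_inter_right hv),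
      hcard.trans_le (Nat.one_le_pow _ _ (Nat.div_pos hj j.succ_pos))⟩
  · have hN : #(closedNeighborhood E w ∩ U) ≤ d * k :=
      (card_le_card inter_subset_left).trans (card_closedNeighborhood_le hE w)
    have hdk : 0 < d * k := Nat.mul_pos hw hk
    obtain ⟨j, hj, hne, hcard⟩ := exists_lt_card_filter_eq_lt (closedNeighborhood E w ∩ U) U c
      (m := (s / d) ^ 2) (J := 6 * k * d) (Nat.pow_pos (Nat.div_pos hds.le hw))
      (by linarith [div_sq_div_le hw hds.le hUd])
    refine ⟨j, hj.trans (by gcongr), hne, hcard.trans_le (Nat.pow_le_pow_left ?_ 2)⟩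
    rw [Nat.le_div_iff_mul_le j.succ_pos]
    calc s / d * (j + 1) ≤ s / d * (6 * k * d) := Nat.mul_le_mul_left _ hj
      _ = 6 * k * (s / d * d) := by ring
      _ ≤ 6 * k * s := Nat.mul_le_mul_left _ (Nat.div_mul_le_self s d)

/-- The vertices are colored in order of decreasing degree. A vertex of degree `d ≤ s` finds a free
color among the first `6kd`, which may be repeated `(s / d) ^ 2` times; hence the caps. -/
theorem exists_isCappedStrongColoring (hk : 0 < k) (hE : ∀ e ∈ E, #e ≤ k) (hs : 0 < s)
    (hm : #E ≤ s ^ 2) (hU : ∀ u ∈ U, 0 < edgeDegree E u) :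
    ∃ c, IsCappedStrongColoring E (6 * k * s) (fun j => (6 * k * s / (j + 1)) ^ 2) U c := by
  induction U using Finset.induction_on_min_value (edgeDegree E) with
  | empty => exact ⟨0, by simp, by simp, by simp⟩
  | insert w U hw hmin ih =>
    rw [forall_mem_insert] at hU
    obtain ⟨c, hc⟩ := ih hU.2
    obtain ⟨j, hj, hne, hcap⟩ := exists_free_color hk hE hs hm hU.1 hmin c
    exact ⟨update c w j, hc.insert hw hj hne hcap⟩

end StrongColoring

theorem exists_strongColoring {V : Type*} [Fintype V] {E : Finset (Finset V)} {k s : ℕ}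
    (hk : 0 < k) (hE : ∀ e ∈ E, #e ≤ k) (hs : 0 < s) (hm : #E ≤ s ^ 2)
    (hiso : ∀ v, ∃ e ∈ E, v ∈ e) :
    ∃ c : V → Fin (6 * k * s), (∀ e ∈ E, Set.InjOn c e) ∧
      ∏ x, 4 * (#{v | c v = x} + 1) ≤ 2 ^ (7 * (6 * k * s)) := by
  classical
  obtain ⟨c, hc⟩ := exists_isCappedStrongColoring (U := univ) hk hE hs hm fun v _ =>
    let ⟨e, he, hve⟩ := hiso v
    card_pos.mpr ⟨e, mem_filter.mpr ⟨he, hve⟩⟩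
  set r := 6 * k * s
  refine ⟨fun v => ⟨c v, hc.lt v (mem_univ v)⟩, fun e he u hu v hv huv => ?_, ?_⟩
  · exact hc.injOn e he (by simpa using hu) (by simpa using hv) (Fin.mk.inj huv)
  · have hcard (j : Fin r) : 4 * (#{v | (⟨c v, hc.lt v (mem_univ v)⟩ : Fin r) = j} + 1) ≤
        8 * (r / (j + 1)) ^ 2 := by
      have hle := hc.card_le j
      have hpos : 1 ≤ (r / (j + 1)) ^ 2 := Nat.one_le_pow _ _ (Nat.div_pos j.isLt (Nat.succ_pos j))
      simp only [Fin.ext_iff]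
      linarith
    calc ∏ j : Fin r, 4 * (#{v | (⟨c v, hc.lt v (mem_univ v)⟩ : Fin r) = j} + 1)
        ≤ ∏ j : Fin r, 8 * (r / (j + 1)) ^ 2 := prod_le_prod' fun j _ => hcard j
      _ = 8 ^ r * (∏ j ∈ range r, r / (j + 1)) ^ 2 := by
          rw [prod_mul_distrib, prod_const, card_univ, Fintype.card_fin, prod_pow,
            Fin.prod_univ_eq_prod_range fun j => r / (j + 1)]
      _ ≤ 8 ^ r * (4 ^ r) ^ 2 := by
          gcongr
          exact prod_range_div_succ_le r
      _ = 2 ^ (7 * r) := by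
          rw [pow_right_comm 4 r 2, ← mul_pow, pow_mul 2 7 r]
          norm_num

theorem hypRamsey_le_card {V α : Type} [Fintype V] [DecidableEq V] [Fintype α] {q : ℕ}
    {E : Finset (Finset V)}
    (h : ∀ χ : Finset α → Fin q, ∃ f : V ↪ α, ∃ c, ∀ e ∈ E, χ (e.map f) = c) :
    hypRamsey q E ≤ Fintype.card α := by
  let g := (Fintype.equivFin α).toEmbedding
  refine Nat.sInf_le fun χ => ?_
  obtain ⟨f, c, hf⟩ := h fun e => χ (e.map g)
  exact ⟨f.trans g, c, fun e he => by rw [← hf e he, map_map]⟩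

theorem two_pow_natTower_mul_pow_le (k q x : ℕ) {r P : ℕ} (hP : P ≤ 2 ^ (7 * r)) :
    2 ^ natTower (k + 1) x * (2 ^ ((r + q + 2) * natTower (k + 1) x)) ^ P ≤
      natTower (k + 2) (8 * r + q + 3 + x) := by
  set a := natTower (k + 1) x
  rw [← pow_mul, ← pow_add]
  refine Nat.pow_le_pow_right two_pos ?_
  calc a + (r + q + 2) * a * P ≤ a * 2 ^ (7 * r) + (r + q + 2) * a * 2 ^ (7 * r) := by
        gcongr
        exact Nat.le_mul_of_pos_right a (by positivity)
    _ = (r + q + 3) * 2 ^ (7 * r) * a := by ring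
    _ ≤ 2 ^ (r + q + 3) * 2 ^ (7 * r) * a := by
        gcongr
        exact Nat.lt_two_pow_self.le
    _ = 2 ^ (8 * r + q + 3) * a := by ring
    _ ≤ natTower (k + 1) (8 * r + q + 3 + x) := two_pow_mul_natTower_succ_le k x _

theorem exists_hypRamsey_le_natTower_of_coloring (k q : ℕ) (hq : 0 < q) :
    ∃ C, ∀ (V : Type) [Fintype V] [DecidableEq V] (E : Finset (Finset V)) (r : ℕ) (c : V → Fin r),
      (∀ e ∈ E, #e = k + 3) → (∀ e ∈ E, Set.InjOn c e) → 0 < r →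
      ∏ x, 4 * (#{v | c v = x} + 1) ≤ 2 ^ (7 * r) →
        hypRamsey q E ≤ natTower (k + 2) (8 * r + q + 3 + C * r) := by
  have : NeZero q := ⟨hq.ne'⟩
  obtain ⟨C, hC, hclique⟩ := exists_isMonochromatic_of_natTower_le (Fin q) (k + 2)
  refine ⟨C, fun V _ _ E r c hE hinj hr hprod => ?_⟩
  have hbound := two_pow_natTower_mul_pow_le k q (C * r) hprod
  set a := natTower (k + 1) (C * r)
  set P := ∏ x, 4 * (#{v | c v = x} + 1)
  have ha : 0 < a := natTower_pos _ (Nat.mul_pos hC hr)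
  have hQ : 4 ≤ 2 ^ ((r + q + 2) * a) := by
    calc 4 = 2 ^ 2 := rfl
      _ ≤ 2 ^ ((r + q + 2) * a) := Nat.pow_le_pow_right two_pos (by nlinarith)
  have hMQ : (2 ^ a) ^ r * q ≤ 2 ^ ((r + q + 2) * a) := by
    calc (2 ^ a) ^ r * q ≤ (2 ^ a) ^ r * 2 ^ q := Nat.mul_le_mul_left _ Nat.lt_two_pow_self.le
      _ = 2 ^ (a * r + q) := by rw [← pow_mul, ← pow_add]
      _ ≤ 2 ^ ((r + q + 2) * a) := Nat.pow_le_pow_right two_pos (by nlinarith)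
  calc hypRamsey q E ≤ Fintype.card (Fin (2 ^ a) × Fin ((2 ^ ((r + q + 2) * a)) ^ P)) :=
        hypRamsey_le_card (exists_embedding_prod_of_clique hE hinj
          (fun χ => let ⟨A, _, c, hA⟩ := hclique r hr _ univ χ (Finset.card_fin _).ge; ⟨A, c, hA⟩)
          hQ (by simpa only [Fintype.card_fin] using hMQ) (Fintype.card_fin _).ge)
    _ = 2 ^ a * (2 ^ ((r + q + 2) * a)) ^ P := by
        rw [Fintype.card_prod, Fintype.card_fin, Fintype.card_fin]
    _ ≤ natTower (k + 2) (8 * r + q + 3 + C * r) := hbound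

theorem exists_hypRamsey_le_natTower (k q : ℕ) (hq : 0 < q) :
    ∃ C, 0 < C ∧ ∀ (V : Type) [Fintype V] [DecidableEq V] (E : Finset (Finset V)) (s : ℕ),
      (∀ e ∈ E, #e = k + 3) → (∀ v, ∃ e ∈ E, v ∈ e) → 0 < s → #E ≤ s ^ 2 →
        hypRamsey q E ≤ natTower (k + 2) (C * s) := by
  obtain ⟨C, h⟩ := exists_hypRamsey_le_natTower_of_coloring k q hq
  refine ⟨(C + 8) * (6 * (k + 3)) + q + 3, by positivity, fun V _ _ E s hE hiso hs hm => ?_⟩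
  obtain ⟨c, hinj, hprod⟩ :=
    exists_strongColoring (k + 2).succ_pos (fun e he => (hE e he).le) hs hm hiso
  refine (h V E _ c hE hinj (by positivity) hprod).trans ((natTower_strictMono _).monotone ?_)
  calc 8 * (6 * (k + 3) * s) + q + 3 + C * (6 * (k + 3) * s)
      = (C + 8) * (6 * (k + 3)) * s + (q + 3) := by ring
    _ ≤ (C + 8) * (6 * (k + 3)) * s + (q + 3) * s :=
        Nat.add_le_add_left (Nat.le_mul_of_pos_right _ hs) _
    _ = ((C + 8) * (6 * (k + 3)) + q + 3) * s := by ring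

/-- For every `k ≥ 3` and `q ≥ 2` there is `C > 0` such that every `k`-uniform
hypergraph with `m ≥ 1` edges and no isolated vertices has `q`-color Ramsey number at
most `tw k (C * √m)`. -/
theorem ramsey_upper_bound (k q : ℕ) (hk : 3 ≤ k) (hq : 2 ≤ q) :
    ∃ C : ℝ, 0 < C ∧
      ∀ (V : Type) [Fintype V] [DecidableEq V] (E : Finset (Finset V)) (m : ℕ),
        (∀ e ∈ E, e.card = k) →
        (∀ v : V, ∃ e ∈ E, v ∈ e) →
        E.card = m → 1 ≤ m →
        (hypRamsey q E : ℝ) ≤ tw k (C * Real.sqrt m) := by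
  obtain ⟨k, rfl⟩ := Nat.exists_eq_add_of_le' hk
  obtain ⟨C, hC, h⟩ := exists_hypRamsey_le_natTower k q (two_pos.trans_le hq)
  refine ⟨2 * C, by positivity, fun V _ _ E m hE hiso hm hm1 => ?_⟩
  have hEs : #E ≤ (Nat.sqrt m + 1) ^ 2 := hm.le.trans (Nat.lt_succ_sqrt' m).le
  have hroot : ((C * (Nat.sqrt m + 1) : ℕ) : ℝ) ≤ 2 * C * Real.sqrt m := by
    have hfloor : (Nat.sqrt m : ℝ) ≤ Real.sqrt m := Real.nat_sqrt_le_real_sqrt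
    have hone : 1 ≤ Real.sqrt m := Real.one_le_sqrt.mpr (mod_cast hm1)
    push_cast
    calc (C : ℝ) * (Nat.sqrt m + 1) ≤ C * (2 * Real.sqrt m) := by gcongr; linarith
      _ = 2 * C * Real.sqrt m := by ring
  calc (hypRamsey q E : ℝ) ≤ natTower (k + 2) (C * (Nat.sqrt m + 1)) :=
        mod_cast h V E (Nat.sqrt m + 1) hE hiso (Nat.succ_pos _) hEs
    _ = tw (k + 3) (C * (Nat.sqrt m + 1) : ℕ) := (tw_succ_natCast _ _).symm
    _ ≤ tw (k + 3) (2 * C * Real.sqrt m) := tw_succ_mono _ hroot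
end

section
/- Let t ≥ 1 and let s_1, …, s_t be positive integers with P = s_1·s_2⋯s_t. Then for every n ≥ 1, every t-uniform hypergraph Γ on n vertices with at least P·n^{t − 1/P} edges contains a copy of K^{(t)}_{s_1,…,s_t}; that is, there exist pairwise disjoint vertex sets W_1, …, W_t ⊆ V(Γ) with |W_i| = s_i for each i, such that every transversal set {w_1, …, w_t} with w_i ∈ W_i for all i is an edge of Γ. -/
open Finset

/-!
Pick `x i j : V` uniformly at random for `i < t`, `j < s i`. By Jensen's inequality, applied to one
coordinate at a time, all `P = ∏ i, s i` transversals of the blocks `x i` are edges with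
probability at least `d ^ P`, where `d` is the probability that `t` random vertices form an edge.
A given pair inside a block collides with probability `1 / n`. The lower bound on the number of
edges makes `d ^ P` exceed the sum of these collision probabilities, so some choice has injective
blocks and all transversals in the hypergraph; as transversals then have `t` distinct vertices,
distinct blocks are disjoint.
-/

open scoped BigOperators

section Density

theorem expect_pow_le_expect_pow {ι : Type*} {A : Finset ι} (hA : A.Nonempty) {f : ι → ℝ}
    (hf : ∀ i ∈ A, 0 ≤ f i) (k : ℕ) : (𝔼 i ∈ A, f i) ^ k ≤ 𝔼 i ∈ A, f i ^ k := by
  have hA0 : (#A : ℝ) ≠ 0 := by exact_mod_cast hA.card_ne_zero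
  have h := Real.pow_arith_mean_le_arith_mean_pow A (fun _ => (#A : ℝ)⁻¹) f
    (fun _ _ => by positivity) (by simp [hA0]) hf k
  simpa only [expect_eq_sum_div_card, ← mul_sum, div_eq_inv_mul] using h

theorem expect_pi_succ {M : Type*} [AddCommMonoid M] [Module ℚ≥0 M] {t : ℕ}
    {X : Fin (t + 1) → Type*} [∀ i, Fintype (X i)] (f : (∀ i, X i) → M) :
    𝔼 x, f x = 𝔼 a : X 0, 𝔼 y : (∀ i : Fin t, X i.succ), f (Fin.cons a y) := by
  rw [← Fintype.expect_equiv (Fin.consEquiv X) (fun p => f (Fin.cons p.1 p.2)) f fun _ => rfl,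
    ← univ_product_univ, expect_product]

theorem prod_pi_succ {M : Type*} [CommMonoid M] {t : ℕ} {X : Fin (t + 1) → Type*}
    [∀ i, Fintype (X i)] (f : (∀ i, X i) → M) :
    ∏ x, f x = ∏ a : X 0, ∏ y : (∀ i : Fin t, X i.succ), f (Fin.cons a y) := by
  rw [← Fintype.prod_equiv (Fin.consEquiv X) (fun p => f (Fin.cons p.1 p.2)) f fun _ => rfl,
    Fintype.prod_prod_type]

theorem expect_pow_le_expect_prod_prod {α β : Type*} [Fintype α] [Fintype β] [Nonempty β]
    {f : α → β → ℝ} (hf : ∀ a b, 0 ≤ f a b) (k : ℕ) :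
    (𝔼 a, 𝔼 b, f a b) ^ k ≤ 𝔼 x : Fin k → α, 𝔼 b, ∏ j, f (x j) b :=
  calc (𝔼 a, 𝔼 b, f a b) ^ k
      = (𝔼 b, 𝔼 a, f a b) ^ k := by rw [expect_comm]
    _ ≤ 𝔼 b, (𝔼 a, f a b) ^ k :=
        expect_pow_le_expect_pow univ_nonempty (fun b _ => expect_nonneg fun a _ => hf a b) k
    _ = 𝔼 x : Fin k → α, 𝔼 b, ∏ j, f (x j) b := by
        simp only [expect_pow, Fintype.piFinset_univ]
        exact expect_comm ..

theorem expect_pow_prod_le_expect_prod {t : ℕ} {V : Fin t → Type*} [∀ i, Fintype (V i)]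
    [∀ i, Nonempty (V i)] (s : Fin t → ℕ) {f : (∀ i, V i) → ℝ} (hf : ∀ w, 0 ≤ f w) :
    (𝔼 w, f w) ^ (∏ i, s i) ≤
      𝔼 x : (∀ i, Fin (s i) → V i), ∏ φ : (∀ i, Fin (s i)), f fun i => x i (φ i) := by
  induction t with
  | zero => simp [Subsingleton.elim _ (default : ∀ i, V i)]
  | succ t ih =>
    let g (a : Fin (s 0) → V 0) (y : ∀ i : Fin t, V i.succ) : ℝ := ∏ j, f (Fin.cons (a j) y)
    have hg a y : 0 ≤ g a y := prod_nonneg fun j _ => hf _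
    have hprod (a : Fin (s 0) → V 0) (y : ∀ i : Fin t, Fin (s i.succ) → V i.succ) :
        ∏ φ : (∀ i, Fin (s i)),
            f (fun i => (Fin.cons a y : ∀ i, Fin (s i) → V i) i (φ i)) =
          ∏ ψ : (∀ i : Fin t, Fin (s i.succ)), g a fun i => y i (ψ i) := by
      rw [prod_pi_succ, prod_comm]
      refine prod_congr rfl fun ψ _ => prod_congr rfl fun j _ => congrArg f (funext fun i => ?_)
      cases i using Fin.cases <;> rfl
    calc (𝔼 w, f w) ^ (∏ i, s i)
        = ((𝔼 v, 𝔼 y, f (Fin.cons v y)) ^ s 0) ^ ∏ i : Fin t, s i.succ := by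
          rw [expect_pi_succ, Fin.prod_univ_succ, pow_mul]
      _ ≤ (𝔼 a, 𝔼 y, g a y) ^ ∏ i : Fin t, s i.succ := by
          gcongr
          · exact pow_nonneg (expect_nonneg fun _ _ => expect_nonneg fun _ _ => hf _) _
          · exact expect_pow_le_expect_prod_prod (fun _ _ => hf _) _
      _ ≤ 𝔼 a, (𝔼 y, g a y) ^ ∏ i : Fin t, s i.succ :=
          expect_pow_le_expect_pow univ_nonempty
            (fun a _ => expect_nonneg fun y _ => hg a y) _
      _ ≤ 𝔼 a, 𝔼 y : (∀ i : Fin t, Fin (s i.succ) → V i.succ),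
            ∏ ψ : (∀ i : Fin t, Fin (s i.succ)), g a fun i => y i (ψ i) :=
          expect_le_expect fun a _ => ih _ (hg a)
      _ = 𝔼 x : (∀ i, Fin (s i) → V i), ∏ φ : (∀ i, Fin (s i)), f fun i => x i (φ i) := by
          simp only [expect_pi_succ, hprod]

end Density

section Collisions

theorem card_filter_apply_eq_mul_card_le {α V : Type*} [Fintype α] [DecidableEq α] [Fintype V]
    [DecidableEq V] {a b : α} (hab : a ≠ b) :
    #{x : α → V | x a = x b} * Fintype.card V ≤ Fintype.card (α → V) := by
  rw [← card_univ (α := V), ← card_product, ← card_univ]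
  refine card_le_card_of_injOn (fun p => Function.update p.1 a p.2) (by simp) ?_
  rintro ⟨x, v⟩ hx ⟨y, u⟩ hy h
  replace hx : x a = x b := by simpa using hx
  replace hy : y a = y b := by simpa using hy
  obtain ⟨rfl, hne⟩ : v = u ∧ ∀ c ≠ a, x c = y c := by
    simpa +contextual [Function.update_eq_iff, Function.update_of_ne] using h
  have hxy : x = y := funext fun c => by
    by_cases hc : c = a
    · rw [hc, hx, hy, hne b hab.symm]
    · exact hne c hc
  rw [hxy]

theorem exists_mem_forall_ne_of_card_lt {α V : Type*} [Fintype α] [DecidableEq α] [Fintype V]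
    {Q : Finset (α × α)} (hQ : ∀ p ∈ Q, p.1 ≠ p.2) {G : Finset (α → V)}
    (hG : #Q * Fintype.card (α → V) < #G * Fintype.card V) :
    ∃ x ∈ G, ∀ p ∈ Q, x p.1 ≠ x p.2 := by
  classical
  by_contra! hbad
  have hsub : G ⊆ Q.biUnion fun p => {x : α → V | x p.1 = x p.2} := fun x hx => by
    simpa using hbad x hx
  refine hG.not_ge ?_
  calc #G * Fintype.card V
      ≤ (∑ p ∈ Q, #{x : α → V | x p.1 = x p.2}) * Fintype.card V := by
        gcongr
        exact (card_le_card hsub).trans card_biUnion_le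
    _ = ∑ p ∈ Q, #{x : α → V | x p.1 = x p.2} * Fintype.card V := sum_mul ..
    _ ≤ #Q * Fintype.card (α → V) :=
        sum_le_card_nsmul _ _ _ fun p hp => card_filter_apply_eq_mul_card_le (hQ p hp)

theorem exists_mem_forall_injective_of_card_lt {ι V : Type*} [Fintype ι] [DecidableEq ι]
    [Fintype V] {s : ι → ℕ} {G : Finset ((Σ i, Fin (s i)) → V)}
    (hG : (∑ i, s i * (s i - 1)) * Fintype.card ((Σ i, Fin (s i)) → V) < #G * Fintype.card V) :
    ∃ x ∈ G, ∀ i, Function.Injective fun j => x ⟨i, j⟩ := by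
  let Q : Finset ((Σ i, Fin (s i)) × (Σ i, Fin (s i))) :=
    univ.biUnion fun i => (univ : Finset (Fin (s i))).offDiag.image
      fun p => (⟨i, p.1⟩, ⟨i, p.2⟩)
  have hQ : ∀ p ∈ Q, p.1 ≠ p.2 := by
    simp only [Q, mem_biUnion, mem_image, mem_offDiag]
    rintro _ ⟨i, -, ⟨j, k⟩, ⟨-, -, hjk⟩, rfl⟩
    simpa using hjk
  have hQcard : #Q ≤ ∑ i, s i * (s i - 1) :=
    card_biUnion_le.trans <| sum_le_sum fun i _ => card_image_le.trans <| by
      simp [offDiag_card, Nat.mul_sub_one]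
  obtain ⟨x, hxG, hx⟩ := exists_mem_forall_ne_of_card_lt hQ
    ((Nat.mul_le_mul_right _ hQcard).trans_lt hG)
  refine ⟨x, hxG, fun i j k hjk => by_contra fun hne => hx (⟨i, j⟩, ⟨i, k⟩) ?_ hjk⟩
  exact mem_biUnion.2 ⟨i, mem_univ i, mem_image.2 ⟨(j, k), by simpa using hne, rfl⟩⟩

end Collisions

section CompletePartite

variable {t : ℕ} {V : Type*} [Fintype V] [DecidableEq V]

/-- The homomorphisms from the complete `t`-partite `t`-uniform hypergraph with parts `Fin (s i)`
to the `t`-ary relation `F`. Its vertices are the pairs `⟨i, j⟩` with `j : Fin (s i)`, and its edges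
are indexed by the transversals `φ`; homomorphisms need not be injective. -/
def completePartiteHoms (s : Fin t → ℕ) (F : Finset (Fin t → V)) :
    Finset ((Σ i, Fin (s i)) → V) :=
  {x | ∀ φ : (∀ i, Fin (s i)), (fun i => x ⟨i, φ i⟩) ∈ F}

theorem dens_pow_prod_le_dens_completePartiteHoms [Nonempty V] (s : Fin t → ℕ)
    (F : Finset (Fin t → V)) :
    ((#F : ℝ) / Fintype.card (Fin t → V)) ^ (∏ i, s i) ≤
      #(completePartiteHoms s F) / Fintype.card ((Σ i, Fin (s i)) → V) := by
  let f (w : Fin t → V) : ℝ := if w ∈ F then 1 else 0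
  have hedges : 𝔼 w, f w = #F / Fintype.card (Fin t → V) := by
    simp [f, Fintype.expect_eq_sum_div_card]
  have hhoms : 𝔼 x : (∀ i, Fin (s i) → V), ∏ φ : (∀ i, Fin (s i)), f (fun i => x i (φ i)) =
      #(completePartiteHoms s F) / Fintype.card ((Σ i, Fin (s i)) → V) := by
    rw [← Fintype.expect_equiv (Equiv.piCurry fun (i : Fin t) (_ : Fin (s i)) => V)
      (fun x => ∏ φ : (∀ i, Fin (s i)), f fun i => x ⟨i, φ i⟩) _ fun _ => rfl]
    simp only [f, Fintype.expect_eq_sum_div_card, prod_ite_zero, prod_const_one, sum_boole,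
      mem_univ, true_imp_iff, completePartiteHoms]
  simpa only [hedges, hhoms] using
    expect_pow_prod_le_expect_prod s fun w => show 0 ≤ f w by positivity

theorem card_pow_mul_le_card_completePartiteHoms_mul [Nonempty V] (s : Fin t → ℕ)
    (F : Finset (Fin t → V)) :
    #F ^ (∏ i, s i) * Fintype.card ((Σ i, Fin (s i)) → V) ≤
      #(completePartiteHoms s F) * Fintype.card V ^ (t * ∏ i, s i) := by
  have h := dens_pow_prod_le_dens_completePartiteHoms s F
  rw [div_pow, div_le_div_iff₀ (by positivity) (by positivity)] at h
  rw [pow_mul, ← Fintype.card_pi_const]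
  exact_mod_cast h

theorem exists_mem_completePartiteHoms_forall_injective {s : Fin t → ℕ} {F : Finset (Fin t → V)}
    (hF : (∑ i, s i * (s i - 1)) * Fintype.card V ^ (t * ∏ i, s i) <
      #F ^ (∏ i, s i) * Fintype.card V) :
    ∃ x ∈ completePartiteHoms s F, ∀ i, Function.Injective fun j => x ⟨i, j⟩ := by
  have : Nonempty V := Fintype.card_pos_iff.1 (pos_of_mul_pos_right (pos_of_gt hF) (Nat.zero_le _))
  refine exists_mem_forall_injective_of_card_lt (lt_of_mul_lt_mul_right ?_
    (Nat.zero_le (Fintype.card V ^ (t * ∏ i, s i))))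
  calc (∑ i, s i * (s i - 1)) * Fintype.card ((Σ i, Fin (s i)) → V)
          * Fintype.card V ^ (t * ∏ i, s i)
      = (∑ i, s i * (s i - 1)) * Fintype.card V ^ (t * ∏ i, s i)
          * Fintype.card ((Σ i, Fin (s i)) → V) := mul_right_comm ..
    _ < #F ^ (∏ i, s i) * Fintype.card V * Fintype.card ((Σ i, Fin (s i)) → V) :=
        Nat.mul_lt_mul_of_pos_right hF Fintype.card_pos
    _ = #F ^ (∏ i, s i) * Fintype.card ((Σ i, Fin (s i)) → V) * Fintype.card V :=
        mul_right_comm ..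
    _ ≤ #(completePartiteHoms s F) * Fintype.card V ^ (t * ∏ i, s i) * Fintype.card V :=
        Nat.mul_le_mul_right _ (card_pow_mul_le_card_completePartiteHoms_mul s F)
    _ = #(completePartiteHoms s F) * Fintype.card V * Fintype.card V ^ (t * ∏ i, s i) :=
        mul_right_comm ..

end CompletePartite

section Threshold

theorem one_add_sum_le_prod_one_add {ι R : Type*} [CommSemiring R] [PartialOrder R]
    [IsOrderedRing R] (A : Finset ι) {f : ι → R} (hf : ∀ i ∈ A, 0 ≤ f i) :
    1 + ∑ i ∈ A, f i ≤ ∏ i ∈ A, (1 + f i) := by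
  induction A using Finset.cons_induction with
  | empty => simp
  | cons a A ha ih =>
    rw [forall_mem_cons] at hf
    have hsum : 0 ≤ ∑ i ∈ A, f i := sum_nonneg hf.2
    rw [sum_cons, prod_cons]
    calc 1 + (f a + ∑ i ∈ A, f i)
        ≤ 1 + (f a + ∑ i ∈ A, f i) + f a * ∑ i ∈ A, f i :=
          le_add_of_nonneg_right (mul_nonneg hf.1 hsum)
      _ = (1 + f a) * (1 + ∑ i ∈ A, f i) := by ring
      _ ≤ (1 + f a) * ∏ i ∈ A, (1 + f i) :=
          mul_le_mul_of_nonneg_left (ih hf.2) (add_nonneg zero_le_one hf.1)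

theorem sum_mul_pred_le_prod_mul_pred {ι : Type*} {A : Finset ι} {s : ι → ℕ}
    (hs : ∀ i ∈ A, 1 ≤ s i) :
    ∑ i ∈ A, s i * (s i - 1) ≤ (∏ i ∈ A, s i) * (∏ i ∈ A, s i - 1) := by
  have hprod : 1 + ∑ i ∈ A, (s i - 1) ≤ ∏ i ∈ A, s i :=
    (one_add_sum_le_prod_one_add A fun _ _ => Nat.zero_le _).trans_eq
      (prod_congr rfl fun i hi => Nat.add_sub_cancel' (hs i hi))
  have hle : ∀ i ∈ A, s i ≤ ∏ i ∈ A, s i := fun i hi =>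
    Nat.le_of_dvd (prod_pos hs) (dvd_prod_of_mem s hi)
  calc ∑ i ∈ A, s i * (s i - 1)
      ≤ ∑ i ∈ A, (∏ i ∈ A, s i) * (s i - 1) :=
        sum_le_sum fun i hi => Nat.mul_le_mul_right _ (hle i hi)
    _ = (∏ i ∈ A, s i) * ∑ i ∈ A, (s i - 1) := (mul_sum ..).symm
    _ ≤ (∏ i ∈ A, s i) * (∏ i ∈ A, s i - 1) := Nat.mul_le_mul_left _ (by omega)

theorem mul_pred_lt_pow_self (P : ℕ) : P * (P - 1) < P ^ P := by
  match P with
  | 0 | 1 => simp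
  | P + 2 =>
    calc (P + 2) * (P + 1) < (P + 2) ^ 2 := by nlinarith
      _ ≤ (P + 2) ^ (P + 2) := Nat.pow_le_pow_right (by omega) (by omega)

theorem pow_mul_pow_le_of_mul_rpow_le {c x m : ℝ} (hc : 0 ≤ c) (hx : 0 < x) {t P : ℕ}
    (hP : P ≠ 0) (h : c * x ^ ((t : ℝ) - 1 / (P : ℝ)) ≤ m) :
    c ^ P * x ^ (t * P) ≤ m ^ P * x := by
  have hexp : (x ^ ((t : ℝ) - 1 / (P : ℝ))) ^ P * x = x ^ (t * P) := by
    have hmul : ((t : ℝ) - 1 / P) * P + 1 = (t * P : ℕ) := by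
      push_cast
      field_simp
      ring
    rw [← Real.rpow_mul_natCast hx.le, ← Real.rpow_add_one hx.ne', hmul, Real.rpow_natCast]
  calc c ^ P * x ^ (t * P) = (c * x ^ ((t : ℝ) - 1 / (P : ℝ))) ^ P * x := by
        rw [mul_pow, mul_assoc, hexp]
    _ ≤ m ^ P * x := by gcongr

theorem sum_mul_pred_mul_pow_lt_of_mul_rpow_le {ι : Type*} [Fintype ι] {s : ι → ℕ}
    (hs : ∀ i, 1 ≤ s i) {n m t : ℕ} (hn : 1 ≤ n)
    (h : ((∏ i, s i : ℕ) : ℝ) * (n : ℝ) ^ ((t : ℝ) - 1 / ((∏ i, s i : ℕ) : ℝ)) ≤ m) :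
    (∑ i, s i * (s i - 1)) * n ^ (t * ∏ i, s i) < m ^ (∏ i, s i) * n := by
  have hP : ∏ i, s i ≠ 0 := prod_ne_zero_iff.2 fun i _ => Nat.one_le_iff_ne_zero.1 (hs i)
  calc (∑ i, s i * (s i - 1)) * n ^ (t * ∏ i, s i)
      < (∏ i, s i) ^ (∏ i, s i) * n ^ (t * ∏ i, s i) :=
        Nat.mul_lt_mul_of_pos_right ((sum_mul_pred_le_prod_mul_pred fun i _ => hs i).trans_lt
          (mul_pred_lt_pow_self _)) (pow_pos hn _)
    _ ≤ m ^ (∏ i, s i) * n := mod_cast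
        pow_mul_pow_le_of_mul_rpow_le (Nat.cast_nonneg _) (Nat.cast_pos.2 hn) hP h

end Threshold

section Hypergraph

theorem card_le_card_filter_image_mem {V : Type*} [Fintype V] [DecidableEq V] {t : ℕ}
    {E : Finset (Finset V)} (hE : ∀ e ∈ E, #e = t) :
    #E ≤ #{w : Fin t → V | univ.image w ∈ E} := by
  refine card_le_card_of_surjOn (fun w => univ.image w) fun e he => ?_
  have himage : univ.image (Subtype.val ∘ (e.equivFinOfCardEq (hE e he)).symm) = e := by
    rw [← image_image, image_univ_equiv, univ_eq_attach, attach_image_val]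
  exact ⟨_, by simpa [himage] using he, himage⟩

theorem disjoint_of_forall_transversal_injective {ι V : Type*}
    {W : ι → Finset V} (hne : ∀ i, (W i).Nonempty)
    (hW : ∀ w : ι → V, (∀ i, w i ∈ W i) → Function.Injective w) {i j : ι} (hij : i ≠ j) :
    Disjoint (W i) (W j) := by
  classical
  choose c hc using hne
  refine disjoint_left.2 fun v hvi hvj => hij ?_
  let w := Function.update (Function.update c i v) j v
  have hw : ∀ k, w k ∈ W k := by
    grind
  exact hW w hw (by simp [w, hij])

theorem hypergraph_KST_general {t : ℕ} {s : Fin t → ℕ} (hs : ∀ i, 1 ≤ s i)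
    {V : Type*} [Fintype V] [DecidableEq V] {E : Finset (Finset V)} (hE : ∀ e ∈ E, #e = t)
    (hcard : (∑ i, s i * (s i - 1)) * Fintype.card V ^ (t * ∏ i, s i) <
      #E ^ (∏ i, s i) * Fintype.card V) :
    ∃ W : Fin t → Finset V,
      (∀ i j, i ≠ j → Disjoint (W i) (W j)) ∧
      (∀ i, #(W i) = s i) ∧
      (∀ w : Fin t → V, (∀ i, w i ∈ W i) → univ.image w ∈ E) := by
  let F : Finset (Fin t → V) := {w | univ.image w ∈ E}
  obtain ⟨x, hx, hinj⟩ := exists_mem_completePartiteHoms_forall_injective (s := s) (F := F)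
    (hcard.trans_le (by gcongr; exact card_le_card_filter_image_mem hE))
  let W (i : Fin t) : Finset V := univ.image fun j => x ⟨i, j⟩
  have hcardW i : #(W i) = s i := by
    rw [card_image_of_injective _ (hinj i), card_univ, Fintype.card_fin]
  have hedge (w : Fin t → V) (hw : ∀ i, w i ∈ W i) : univ.image w ∈ E := by
    choose φ _ hφ using fun i => mem_image.1 (hw i)
    simpa [F, hφ] using (mem_filter.1 hx).2 φ
  have hnonempty i : (W i).Nonempty := card_pos.1 ((hs i).trans_eq (hcardW i).symm)
  have hinjective (w : Fin t → V) (hw : ∀ i, w i ∈ W i) : Function.Injective w := by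
    have hcard_image : #(univ.image w) = #(univ : Finset (Fin t)) := by simp [hE _ (hedge w hw)]
    simpa using card_image_iff.1 hcard_image
  exact ⟨W, fun _ _ => disjoint_of_forall_transversal_injective hnonempty hinjective,
    hcardW, hedge⟩

end Hypergraph

/-- Kővári–Sós–Turán for `t`-uniform hypergraphs: if `s 1, …, s t` are positive with
product `P`, then every `t`-uniform hypergraph on `n ≥ 1` vertices with at least
`P * n ^ (t - 1/P)` edges contains a complete `t`-partite subhypergraph with parts of
sizes `s 1, …, s t`. -/
theorem hypergraph_KST (t : ℕ) (ht : 1 ≤ t) (s : Fin t → ℕ) (hs : ∀ i, 1 ≤ s i)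
    (P : ℕ) (hP : P = ∏ i, s i)
    (V : Type) [Fintype V] [DecidableEq V] (n : ℕ) (hn : 1 ≤ n)
    (hV : Fintype.card V = n)
    (E : Finset (Finset V)) (hE : ∀ e ∈ E, e.card = t)
    (hcard : (P : ℝ) * (n : ℝ) ^ ((t : ℝ) - 1 / (P : ℝ)) ≤ (E.card : ℝ)) :
    ∃ W : Fin t → Finset V,
      (∀ i j, i ≠ j → Disjoint (W i) (W j)) ∧
      (∀ i, (W i).card = s i) ∧
      (∀ w : Fin t → V, (∀ i, w i ∈ W i) → Finset.image w Finset.univ ∈ E) := by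
  subst hP hV
  exact hypergraph_KST_general hs hE (sum_mul_pred_mul_pow_lt_of_mul_rpow_le hs hn hcard)
end

section
/- For every integer k ≥ 3 there exist constants c_k, c'_k > 0 such that for every sufficiently large n there is a k-uniform hypergraph H on n vertices with maximum degree at most c_k·n (every vertex lies in at most c_k·n edges) whose 4-color Ramsey number satisfies r_k(H; 4) ≥ tw_k(c'_k·n). -/
open Finset

/-!
The edges of `H` are the star edges of a sparse graph `Γ` on `n` vertices: `k`-sets whose vertices,
all but one, lie in a star of `Γ`. If `Γ` has bounded degree, a vertex lies in `O(n)` star edges. A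
random graph with `O(n)` edges, pruned at its vertices of large degree, joins any two disjoint sets
of linear size.

The colouring comes from stepping up. Subsets of `{0, …, 2 ^ B - 1}` span subtrees of the binary
tree of height `B`. The colour of a `(k + 1)`-set spanning a comb is read off from the `k` levels at
which that comb branches, and the remaining sets are coloured by the shape of their subtree. Given a
joining graph on a set `V` of leaves, follow a path from the root always taking the larger half
until only a fixed fraction of `V` remains below, and sort the other vertices by the level at which
they leave the path. Either linearly many of them leave at distinct levels and on the same side,
and then they span combs whose branch levels carry the structure of a smaller joining graph, or
many of them share their level with another vertex. In the second case the joining property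
provides an adjacent pair leaving at different levels, hence a fork, whose star edges have too many
shapes to get a single colour. So the construction for `k` colours the `(k + 1)`-sets of an
exponentially larger set, at the price of a constant factor in the size of `V`.
-/

/-! ### The finite Ramsey theorem -/

/-- Every `κ`-colouring of the subsets of a linearly ordered set with at least `N` elements has
an `n`-element subset all of whose `k`-subsets get the same colour. -/
def IsRamseyBound (κ : Type*) (k n N : ℕ) : Prop :=
  ∀ {α : Type} [LinearOrder α] (S : Finset α), N ≤ #S → ∀ χ : Finset α → κ,
    ∃ T ⊆ S, #T = n ∧ ∃ c, ∀ e ⊆ T, #e = k → χ e = c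

/-- Every `κ`-colouring of the subsets of a linearly ordered set with at least `N` elements has
an `m`-element subset in which the colour of a `k`-subset is determined by its least element. -/
def IsPrehomogeneousBound (κ : Type*) (k m N : ℕ) : Prop :=
  ∀ {α : Type} [LinearOrder α] (S : Finset α), N ≤ #S → ∀ χ : Finset α → κ,
    ∃ A ⊆ S, #A = m ∧ ∃ col : α → κ, ∀ e ⊆ A, #e = k → ∀ v, IsLeast (e : Set α) v → χ e = col v

section Ramsey

variable {κ : Type*} {k m n N N' : ℕ}

theorem isPrehomogeneousBound_zero : IsPrehomogeneousBound κ (k + 1) 0 0 := by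
  intro α _ S _ χ
  refine ⟨∅, empty_subset S, card_empty, fun _ => χ ∅, fun e he hek => ?_⟩
  rw [subset_empty.mp he, card_empty] at hek
  exact absurd hek.symm k.succ_ne_zero

theorem IsPrehomogeneousBound.succ (hN' : IsPrehomogeneousBound κ (k + 1) m N')
    (hN : IsRamseyBound κ k N' N) : IsPrehomogeneousBound κ (k + 1) (m + 1) (N + 1) := by
  intro α _ S hS χ
  obtain ⟨v, hvS, hmin⟩ : ∃ v, IsLeast (S : Set α) v :=
    ⟨_, S.isLeast_min' (card_pos.mp (by omega))⟩
  obtain ⟨T, hTS, hTN', c, hc⟩ :=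
    hN (S.erase v) (by rw [card_erase_of_mem hvS]; omega) fun e => χ (insert v e)
  obtain ⟨A, hAT, hAm, col, hcol⟩ := hN' T hTN'.ge χ
  have hvA : v ∉ A := fun h => notMem_erase v S (hTS (hAT h))
  have hAS : A ⊆ S := hAT.trans (hTS.trans (erase_subset v S))
  refine ⟨insert v A, insert_subset hvS hAS, by rw [card_insert_of_notMem hvA, hAm],
    Function.update col v c, fun e he hek u hu => ?_⟩
  have hu_mem : u ∈ e := hu.1
  by_cases huv : u = v
  · subst huv
    rw [Function.update_self, ← hc (e.erase u) ((subset_insert_iff.mp he).trans hAT)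
      (by rw [card_erase_of_mem hu_mem]; omega), insert_erase hu_mem]
  · have hve : v ∉ e := fun hve =>
      huv ((hu.2 hve).antisymm (hmin (insert_subset hvS hAS (he hu_mem))))
    rw [Function.update_of_ne huv]
    exact hcol e ((subset_insert_iff_of_notMem hve).mp he) hek u hu

theorem IsPrehomogeneousBound.isRamseyBound [Fintype κ]
    (hN : IsPrehomogeneousBound κ (k + 1) (Fintype.card κ * n) N) :
    IsRamseyBound κ (k + 1) n N := by
  classical
  intro α _ S hS χ
  obtain ⟨A, hAS, hA, col, hcol⟩ := hN S hS χ
  obtain ⟨c, -, hc⟩ := exists_le_card_fiber_of_mul_le_card_of_maps_to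
    (fun a _ => mem_univ (col a)) ⟨χ ∅, mem_univ _⟩ hA.ge
  obtain ⟨T, hT, hTn⟩ := exists_subset_card_eq hc
  have hTA : T ⊆ A := hT.trans (filter_subset _ _)
  refine ⟨T, hTA.trans hAS, hTn, c, fun e he hek => ?_⟩
  have hne : e.Nonempty := card_pos.mp (by omega)
  rw [hcol e (he.trans hTA) hek _ (e.isLeast_min' hne)]
  exact (mem_filter.mp (hT (he (e.min'_mem hne)))).2

theorem exists_isRamseyBound (κ : Type*) [Finite κ] (k n : ℕ) :
    ∃ N, IsRamseyBound κ k n N := by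
  have := Fintype.ofFinite κ
  induction k generalizing n with
  | zero =>
    refine ⟨n, fun {α} _ S hS χ => ?_⟩
    obtain ⟨T, hTS, hTn⟩ := exists_subset_card_eq hS
    exact ⟨T, hTS, hTn, χ ∅, fun e _ he => by rw [card_eq_zero.mp he]⟩
  | succ k ih =>
    have exists_prehomogeneous (m : ℕ) : ∃ N, IsPrehomogeneousBound κ (k + 1) m N := by
      induction m with
      | zero => exact ⟨0, isPrehomogeneousBound_zero⟩
      | succ m ihm =>
        obtain ⟨N', hN'⟩ := ihm
        obtain ⟨N, hN⟩ := ih N'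
        exact ⟨N + 1, hN'.succ hN⟩
    obtain ⟨N, hN⟩ := exists_prehomogeneous (Fintype.card κ * n)
    exact ⟨N, hN.isRamseyBound⟩

end Ramsey

theorem exists_monochromatic_embedding {V : Type} [Finite V] (q k : ℕ) {E : Finset (Finset V)}
    (hE : ∀ e ∈ E, #e = k) :
    ∃ N : ℕ, ∀ χ : Finset (Fin N) → Fin q,
      ∃ f : V ↪ Fin N, ∃ c, ∀ e ∈ E, χ (e.map f) = c := by
  have := Fintype.ofFinite V
  obtain ⟨N, hN⟩ := exists_isRamseyBound (Fin q) k (Fintype.card V)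
  refine ⟨N, fun χ => ?_⟩
  obtain ⟨T, -, hT, c, hc⟩ := hN univ (by simp) χ
  refine ⟨(Fintype.equivFin V).toEmbedding.trans (T.orderEmbOfFin hT).toEmbedding, c,
    fun e he => hc _ (fun x hx => ?_) (by rw [card_map, hE e he])⟩
  obtain ⟨v, -, rfl⟩ := mem_map.mp hx
  exact T.orderEmbOfFin_mem hT _

theorem le_hypRamsey {V κ : Type} [Fintype V] [DecidableEq V] [Fintype κ] {k B : ℕ}
    {E : Finset (Finset V)} (hE : ∀ e ∈ E, #e = k) (ψ : Finset ℕ → κ)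
    (hψ : ∀ f : V ↪ ℕ, (∀ v, f v < B) → ∀ c, ∃ e ∈ E, ψ (e.map f) ≠ c) :
    B ≤ hypRamsey (Fintype.card κ) E := by
  refine le_csInf (exists_monochromatic_embedding _ k hE) fun N hN => ?_
  by_contra! hlt
  obtain ⟨f, c, hc⟩ := hN fun e => Fintype.equivFin κ (ψ (e.map Fin.valEmbedding))
  obtain ⟨e, he, hne⟩ := hψ (f.trans Fin.valEmbedding) (fun v => (f v).isLt.trans hlt)
    ((Fintype.equivFin κ).symm c)
  rw [← map_map, Ne, Equiv.eq_symm_apply] at hne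
  exact hne (hc e he)

/-! ### The binary tree on the natural numbers -/

/-- The height at which `x` and `y` branch in the binary tree: the least `h` such that `x` and `y`
agree after deleting their last `h` binary digits. -/
def splitLevel (x y : ℕ) : ℕ :=
  Nat.size (x ^^^ y)

theorem splitLevel_le_iff {x y h : ℕ} : splitLevel x y ≤ h ↔ x / 2 ^ h = y / 2 ^ h := by
  rw [splitLevel, Nat.size_le, ← Nat.div_eq_zero_iff_lt (by positivity),
    ← Nat.shiftRight_eq_div_pow, Nat.shiftRight_xor_distrib, Nat.xor_eq_zero_iff,
    Nat.shiftRight_eq_div_pow, Nat.shiftRight_eq_div_pow]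

theorem splitLevel_comm (x y : ℕ) : splitLevel x y = splitLevel y x := by
  rw [splitLevel, splitLevel, Nat.xor_comm]

@[simp] theorem splitLevel_eq_zero {x y : ℕ} : splitLevel x y = 0 ↔ x = y := by
  rw [← Nat.le_zero, splitLevel_le_iff, pow_zero, Nat.div_one, Nat.div_one]

theorem splitLevel_le_max (x y z : ℕ) :
    splitLevel x z ≤ max (splitLevel x y) (splitLevel y z) :=
  splitLevel_le_iff.mpr ((splitLevel_le_iff.mp (le_max_left _ _)).trans
    (splitLevel_le_iff.mp (le_max_right _ _)))

theorem splitLevel_le_iff_of_le {x y z h : ℕ} (hyz : splitLevel y z ≤ h) :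
    splitLevel x z ≤ h ↔ splitLevel x y ≤ h := by
  rw [splitLevel_le_iff, splitLevel_le_iff, splitLevel_le_iff.mp hyz]

theorem splitLevel_le_of_lt_two_pow {x y h : ℕ} (hx : x < 2 ^ h) (hy : y < 2 ^ h) :
    splitLevel x y ≤ h := by
  rw [splitLevel_le_iff, Nat.div_eq_of_lt hx, Nat.div_eq_of_lt hy]

theorem splitLevel_eq_of_lt {x y z : ℕ} (h : splitLevel y z < splitLevel x z) :
    splitLevel x y = splitLevel x z := by
  have hxy := splitLevel_le_max x z y
  have hxz := splitLevel_le_max x y z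
  rw [splitLevel_comm z y] at hxy
  omega

theorem splitLevel_lt_of_eq {x y p : ℕ} (hxp : x ≠ p) (h : splitLevel x p = splitLevel y p) :
    splitLevel x y < splitLevel x p := by
  obtain ⟨t, ht⟩ := Nat.exists_eq_succ_of_ne_zero (splitLevel_eq_zero.not.mpr hxp)
  have halve (z : ℕ) : z / 2 ^ (t + 1) = z / 2 ^ t / 2 := by
    rw [Nat.div_div_eq_div_mul, pow_succ]
  have hx : ¬ splitLevel x p ≤ t := by omega
  have hy : ¬ splitLevel y p ≤ t := by omega
  have hx' : splitLevel x p ≤ t + 1 := by omega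
  have hy' : splitLevel y p ≤ t + 1 := by omega
  rw [splitLevel_le_iff] at hx hy
  rw [splitLevel_le_iff, halve, halve] at hx' hy'
  -- The digits of `x` and `y` at position `t` both differ from that of `p`, so they agree.
  have : splitLevel x y ≤ t := splitLevel_le_iff.mpr (by omega)
  omega

theorem cmp_eq_cmp_of_splitLevel_lt {x y z : ℕ} (h : splitLevel y z < splitLevel x z) :
    cmp x y = cmp x z := by
  have hyz := splitLevel_le_iff.mp (le_refl (splitLevel y z))
  have hxz : x / 2 ^ splitLevel y z ≠ z / 2 ^ splitLevel y z :=
    splitLevel_le_iff.not.mp h.not_ge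
  have mono {a b : ℕ} (hab : a / 2 ^ splitLevel y z < b / 2 ^ splitLevel y z) : a < b :=
    lt_of_not_ge fun hba => hab.not_ge (Nat.div_le_div_right hba)
  rcases hxz.lt_or_gt with hlt | hgt
  · rw [(cmp_eq_lt_iff x z).mpr (mono hlt), (cmp_eq_lt_iff x y).mpr (mono (hyz ▸ hlt))]
  · rw [(cmp_eq_gt_iff x z).mpr (mono hgt), (cmp_eq_gt_iff x y).mpr (mono (hyz ▸ hgt))]

/-- The subtree of the binary tree spanned by `S` is a comb whose odd one out of every triple `x`,
`y`, `z` always lies on the side `o` of the other two: it is the least element of the triple for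
`o = .lt` and the greatest for `o = .gt`. -/
def IsComb (o : Ordering) (S : Finset ℕ) : Prop :=
  ∀ x ∈ S, ∀ y ∈ S, ∀ z ∈ S, y ≠ z → splitLevel y z < splitLevel x y → cmp x y = o

/-- The topmost branching of the subtree of the binary tree spanned by `S` separates a single
element from all others. -/
def IsolatedTop (S : Finset ℕ) : Prop :=
  ∃ x ∈ S, ∀ y ∈ S, ∀ z ∈ S, y ≠ x → z ≠ x → splitLevel y z < splitLevel x y

/-- The binary positions at which the subtree of the binary tree spanned by `S` branches. -/
def branchPositions (S : Finset ℕ) : Finset ℕ :=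
  S.offDiag.image fun p => splitLevel p.1 p.2 - 1

theorem isComb_triple {a b c : ℕ} (h : splitLevel b c < splitLevel a b) :
    IsComb (cmp a b) {a, b, c} := by
  have hac : splitLevel a c = splitLevel a b :=
    splitLevel_eq_of_lt (by rwa [splitLevel_comm c b])
  have hcmp : cmp a c = cmp a b := cmp_eq_cmp_of_splitLevel_lt (by rwa [splitLevel_comm c b])
  have hba := splitLevel_comm b a
  have hca := splitLevel_comm c a
  have hcb := splitLevel_comm c b
  have hself (x : ℕ) : splitLevel x x = 0 := splitLevel_eq_zero.mpr rfl
  intro x hx y hy z hz hyz hlt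
  simp only [mem_insert, mem_singleton] at hx hy hz
  rcases hx with rfl | rfl | rfl <;> rcases hy with rfl | rfl | rfl <;>
    rcases hz with rfl | rfl | rfl <;> grind

/-- The level at which `x` leaves the path from the root of the binary tree down to the node of
height `h` above `p`, or `0` if `x` lies below that node. -/
def exitLevel (p h x : ℕ) : ℕ :=
  if splitLevel x p ≤ h then 0 else splitLevel x p

section ExitLevel

variable {p h x y z : ℕ} {o : Ordering} {S : Finset ℕ}

theorem exitLevel_eq_zero_iff : exitLevel p h x = 0 ↔ splitLevel x p ≤ h := by
  unfold exitLevel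
  split_ifs <;> omega

theorem exitLevel_eq_iff {t : ℕ} (ht : 0 < t) :
    exitLevel p h x = t ↔ h < t ∧ splitLevel x p = t := by
  unfold exitLevel
  split_ifs <;> omega

theorem splitLevel_lt_of_exitLevel_lt (hyx : exitLevel p h y < exitLevel p h x) :
    splitLevel y p < splitLevel x p ∧ exitLevel p h x = splitLevel x p := by
  unfold exitLevel at *
  split_ifs at * <;> omega

theorem splitLevel_eq_exitLevel (hyx : exitLevel p h y < exitLevel p h x) :
    splitLevel x y = exitLevel p h x := by
  obtain ⟨hlt, hx⟩ := splitLevel_lt_of_exitLevel_lt hyx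
  rw [hx, splitLevel_eq_of_lt hlt]

theorem cmp_eq_cmp_of_exitLevel_lt (hyx : exitLevel p h y < exitLevel p h x) :
    cmp x y = cmp x p :=
  cmp_eq_cmp_of_splitLevel_lt (splitLevel_lt_of_exitLevel_lt hyx).1

theorem splitLevel_lt_of_exitLevel_eq (hxy : exitLevel p h x = exitLevel p h y)
    (hxz : exitLevel p h x ≤ exitLevel p h z) (hz : 0 < exitLevel p h z) :
    splitLevel x y < exitLevel p h z := by
  rcases Nat.eq_zero_or_pos (exitLevel p h x) with hx | hx
  · have hxp := exitLevel_eq_zero_iff.mp hx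
    have hyp := exitLevel_eq_zero_iff.mp (hxy ▸ hx)
    have hz' := (exitLevel_eq_iff hz).mp rfl
    have := splitLevel_le_max x p y
    rw [splitLevel_comm p y] at this
    omega
  · have hxp := ((exitLevel_eq_iff hx).mp rfl).2
    have hyp := ((exitLevel_eq_iff hx).mp hxy.symm).2
    have hne : x ≠ p := splitLevel_eq_zero.not.mp (by omega)
    exact ((splitLevel_lt_of_eq hne (hxp.trans hyp.symm)).trans_eq hxp).trans_le hxz

theorem splitLevel_lt_exitLevel (hxz : exitLevel p h x < exitLevel p h z)
    (hyz : exitLevel p h y < exitLevel p h z) : splitLevel x y < exitLevel p h z := by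
  rcases lt_trichotomy (exitLevel p h x) (exitLevel p h y) with hlt | heq | hgt
  · rwa [splitLevel_comm, splitLevel_eq_exitLevel hlt]
  · exact splitLevel_lt_of_exitLevel_eq heq hxz.le (Nat.zero_lt_of_lt hxz)
  · rwa [splitLevel_eq_exitLevel hgt]

theorem splitLevel_eq_max_exitLevel (hxy : exitLevel p h x ≠ exitLevel p h y) :
    splitLevel x y = max (exitLevel p h x) (exitLevel p h y) := by
  rcases hxy.lt_or_gt with hlt | hgt
  · rw [splitLevel_comm, splitLevel_eq_exitLevel hlt, max_eq_right hlt.le]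
  · rw [splitLevel_eq_exitLevel hgt, max_eq_left hgt.le]

theorem isComb_of_injOn_exitLevel (hS : Set.InjOn (exitLevel p h) S)
    (ho : ∀ x ∈ S, 0 < exitLevel p h x → cmp x p = o) : IsComb o S := by
  intro x hx y hy z hz hyz hlt
  have hxy : x ≠ y := by
    rintro rfl
    rw [splitLevel_eq_zero.mpr rfl] at hlt
    omega
  rw [splitLevel_eq_max_exitLevel (hS.ne hy hz hyz),
    splitLevel_eq_max_exitLevel (hS.ne hx hy hxy)] at hlt
  have hyx : exitLevel p h y < exitLevel p h x := by omega
  rw [cmp_eq_cmp_of_exitLevel_lt hyx]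
  exact ho x hx (Nat.zero_lt_of_lt hyx)

theorem branchPositions_insert {w : ℕ} {e : Finset ℕ} (hw : exitLevel p h w = 0)
    (he : ∀ x ∈ e, 0 < exitLevel p h x) (hinj : Set.InjOn (exitLevel p h) e) :
    branchPositions (insert w e) = e.image fun x => exitLevel p h x - 1 := by
  ext t
  simp only [branchPositions, mem_image, mem_offDiag, mem_insert, Prod.exists]
  constructor
  · rintro ⟨x, y, ⟨hx | hx, hy | hy, hxy⟩, rfl⟩
    · exact absurd (hx.trans hy.symm) hxy
    · subst hx
      exact ⟨y, hy, by rw [splitLevel_comm, splitLevel_eq_exitLevel (hw ▸ he y hy)]⟩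
    · subst hy
      exact ⟨x, hx, by rw [splitLevel_eq_exitLevel (hw ▸ he x hx)]⟩
    · rw [splitLevel_eq_max_exitLevel (hinj.ne hx hy hxy)]
      rcases max_choice (exitLevel p h x) (exitLevel p h y) with hmax | hmax <;> rw [hmax]
      exacts [⟨x, hx, rfl⟩, ⟨y, hy, rfl⟩]
  · rintro ⟨x, hx, rfl⟩
    have hwx : exitLevel p h w < exitLevel p h x := hw ▸ he x hx
    exact ⟨x, w, ⟨.inr hx, .inl rfl, fun hxw => (hxw ▸ hwx).ne rfl⟩,
      by rw [splitLevel_eq_exitLevel hwx]⟩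

theorem IsComb.cmp_center_eq (hS : IsComb o S) (hx : x ∈ S) (hy : y ∈ S) (hz : z ∈ S)
    (hyz : y ≠ z) (hyx : exitLevel p h y < exitLevel p h x)
    (hzx : exitLevel p h z < exitLevel p h x) : cmp x p = o := by
  rw [← cmp_eq_cmp_of_exitLevel_lt hyx]
  refine hS x hx y hy z hz hyz ?_
  rw [splitLevel_eq_exitLevel hyx]
  exact splitLevel_lt_exitLevel hyx hzx

theorem IsComb.cmp_center_eq_swap (hS : IsComb o S) (hx : x ∈ S) (hy : y ∈ S) (hz : z ∈ S)
    (hyz : y ≠ z) (heq : exitLevel p h y = exitLevel p h z)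
    (hxy : exitLevel p h x < exitLevel p h y) : cmp y p = o.swap := by
  rw [← cmp_eq_cmp_of_exitLevel_lt hxy, ← cmp_swap]
  refine congrArg Ordering.swap (hS x hx y hy z hz hyz ?_)
  rw [splitLevel_comm x y, splitLevel_eq_exitLevel hxy]
  exact splitLevel_lt_of_exitLevel_eq heq le_rfl (Nat.zero_lt_of_lt hxy)

end ExitLevel

theorem exists_heavy_half {H : ℕ} {V : Finset ℕ} (hV : V.Nonempty)
    (hH : ∀ x ∈ V, ∀ y ∈ V, splitLevel x y ≤ H + 1) :
    ∃ x ∈ V, #V ≤ 2 * #{v ∈ V | splitLevel v x ≤ H} := by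
  obtain ⟨a, ha⟩ := hV
  by_cases hheavy : #V ≤ 2 * #{v ∈ V | splitLevel v a ≤ H}
  · exact ⟨a, ha, hheavy⟩
  have hsum := card_filter_add_card_filter_not (s := V) fun v => splitLevel v a ≤ H
  obtain ⟨b, hb⟩ : {v ∈ V | ¬ splitLevel v a ≤ H}.Nonempty := card_pos.mp (by omega)
  have hfar {v : ℕ} (hv : v ∈ {v ∈ V | ¬ splitLevel v a ≤ H}) :
      v ∈ V ∧ splitLevel v a = H + 1 := by
    obtain ⟨hvV, hva⟩ := mem_filter.mp hv
    exact ⟨hvV, le_antisymm (hH v hvV a ha) (by omega)⟩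
  have hsub : {v ∈ V | ¬ splitLevel v a ≤ H} ⊆ {v ∈ V | splitLevel v b ≤ H} := fun v hv => by
    have hva := (hfar hv).2
    have hne : v ≠ a := splitLevel_eq_zero.not.mp (by omega)
    have hlt := splitLevel_lt_of_eq hne (hva.trans (hfar hb).2.symm)
    exact mem_filter.mpr ⟨(hfar hv).1, by omega⟩
  have := card_le_card hsub
  exact ⟨b, (hfar hb).1, by omega⟩

theorem exists_center {H q : ℕ} (hq : 1 ≤ q) {V : Finset ℕ}
    (hH : ∀ x ∈ V, ∀ y ∈ V, splitLevel x y ≤ H) (hqV : q < #V) :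
    ∃ p ∈ V, ∃ h ≤ H, q < 2 * #{v ∈ V | splitLevel v p ≤ h} ∧
      #{v ∈ V | splitLevel v p ≤ h} ≤ q ∧
      ∀ t > h, 2 * #{v ∈ V | splitLevel v p = t} ≤ #V := by
  induction H generalizing V with
  | zero =>
    have : #V ≤ 1 := card_le_one.mpr fun x hx y hy =>
      splitLevel_eq_zero.mp (Nat.le_zero.mp (hH x hx y hy))
    omega
  | succ H ih =>
    obtain ⟨a, ha, hheavy⟩ := exists_heavy_half (card_pos.mp (by omega)) hH
    set W := {v ∈ V | splitLevel v a ≤ H} with hW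
    have hWV : W ⊆ V := filter_subset _ V
    have mem_W_iff {p v : ℕ} (hp : p ∈ W) (hv : v ∈ V) : v ∈ W ↔ splitLevel v p ≤ H := by
      rw [hW, mem_filter, and_iff_right hv, splitLevel_le_iff_of_le (mem_filter.mp hp).2]
    have hfar {p : ℕ} (hp : p ∈ W) {t : ℕ} (ht : H < t) :
        2 * #{v ∈ V | splitLevel v p = t} ≤ #V := by
      have hsub : {v ∈ V | splitLevel v p = t} ⊆ V \ W := fun v hv => by
        obtain ⟨hvV, rfl⟩ := mem_filter.mp hv
        exact mem_sdiff.mpr ⟨hvV, fun hvW => ht.not_ge ((mem_W_iff hp hvV).mp hvW)⟩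
      have hle := card_le_card hsub
      rw [card_sdiff_of_subset hWV] at hle
      omega
    have haW : a ∈ W := mem_filter.mpr ⟨ha, by simp [splitLevel_eq_zero.mpr]⟩
    by_cases hWq : #W ≤ q
    · exact ⟨a, ha, H, H.le_succ, hqV.trans_le hheavy, hWq, fun t ht => hfar haW ht⟩
    obtain ⟨p, hp, h, hhH, hlow, hupp, hlevel⟩ :=
      ih (fun x hx y hy => (mem_W_iff hy (hWV hx)).mp hx) (not_le.mp hWq)
    have filter_W {P : ℕ → Prop} [DecidablePred P] (hP : ∀ t, P t → t ≤ H) :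
        {v ∈ W | P (splitLevel v p)} = {v ∈ V | P (splitLevel v p)} := by
      ext v
      simp only [mem_filter, and_congr_left_iff]
      exact fun hv => ⟨fun hvW => hWV hvW, fun hvV => (mem_W_iff hp hvV).mpr (hP _ hv)⟩
    rw [filter_W (P := (· ≤ h)) fun t ht => ht.trans hhH] at hlow hupp
    refine ⟨p, hWV hp, h, hhH.trans H.le_succ, hlow, hupp, fun t ht => ?_⟩
    rcases le_or_gt t H with htH | htH
    · have := hlevel t ht
      rw [filter_W (P := (· = t)) fun s hs => hs.trans_le htH] at this
      exact this.trans (card_le_card hWV)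
    · exact hfar hp htH

theorem exists_exitLevel {q B : ℕ} (hq : 1 ≤ q) {V : Finset ℕ} (hB : V ⊆ range (2 ^ B))
    (hqV : q < #V) :
    ∃ p h, q < 2 * #{v ∈ V | exitLevel p h v = 0} ∧ #{v ∈ V | exitLevel p h v = 0} ≤ q ∧
      (∀ v ∈ V, exitLevel p h v ≤ B) ∧
      ∀ t > 0, 2 * #{v ∈ V | exitLevel p h v = t} ≤ #V := by
  have hsplit : ∀ x ∈ V, ∀ y ∈ V, splitLevel x y ≤ B := fun x hx y hy =>
    splitLevel_le_of_lt_two_pow (mem_range.mp (hB hx)) (mem_range.mp (hB hy))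
  obtain ⟨p, hp, h, -, hlow, hupp, hlevel⟩ := exists_center hq hsplit hqV
  simp only [exitLevel_eq_zero_iff]
  refine ⟨p, h, hlow, hupp, fun v hv => ?_, fun t ht => ?_⟩
  · have := hsplit v hv p hp
    unfold exitLevel
    split_ifs <;> omega
  · simp only [exitLevel_eq_iff ht]
    rcases lt_or_ge h t with hht | hth
    · simpa only [hht, true_and] using hlevel t hht
    · simp only [hth.not_gt, false_and, filter_false, card_empty, mul_zero, Nat.zero_le]

/-! ### Star edges of joining graphs -/

/-- All vertices of `e` but one lie in a star of `G`. -/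
def IsStarEdge {U : Type*} (G : SimpleGraph U) (e : Finset U) : Prop :=
  ∃ v ∈ e, ∃ z ∈ e, z ≠ v ∧ ∀ u ∈ e, u ≠ v → u ≠ z → G.Adj v u

/-- Any two disjoint subsets of `V` with at least `s` vertices are joined by an edge of `G`. -/
def IsJoiningOn {U : Type*} (G : SimpleGraph U) (s : ℕ) (V : Finset U) : Prop :=
  ∀ A ⊆ V, ∀ B ⊆ V, s ≤ #A → s ≤ #B → Disjoint A B → ∃ a ∈ A, ∃ b ∈ B, G.Adj a b

/-- No joining graph on at least `m` of the numbers below `B` has all its star edges of size `k`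
in one colour of `φ`. -/
def AvoidsStars {κ : Type*} (s k m B : ℕ) (φ : Finset ℕ → κ) : Prop :=
  ∀ (G : SimpleGraph ℕ) (V : Finset ℕ), V ⊆ range B → m ≤ #V → IsJoiningOn G s V →
    ∀ c, ∃ e ⊆ V, #e = k ∧ IsStarEdge G e ∧ φ e ≠ c

section Joining

variable {U : Type*} {G : SimpleGraph U} {s : ℕ} {V W : Finset U}

theorem IsJoiningOn.mono (hV : IsJoiningOn G s V) (hWV : W ⊆ V) : IsJoiningOn G s W :=
  fun A hA B hB => hV A (hA.trans hWV) B (hB.trans hWV)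

theorem IsStarEdge.exists_insert [DecidableEq U] {e : Finset U} (he : IsStarEdge G e)
    {C : Set U} (hC : ∀ v ∈ e, ∃ w ∈ C, G.Adj v w) : ∃ w ∈ C, IsStarEdge G (insert w e) := by
  obtain ⟨v, hv, z, hz, hzv, hadj⟩ := he
  obtain ⟨w, hw, hvw⟩ := hC v hv
  refine ⟨w, hw, v, mem_insert_of_mem hv, z, mem_insert_of_mem hz, hzv, fun u hu huv huz => ?_⟩
  rcases mem_insert.mp hu with rfl | hu
  exacts [hvw, hadj u hu huv huz]

theorem IsJoiningOn.card_lowDegree_le [DecidableRel G.Adj]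
    (hV : IsJoiningOn G s V) (j : ℕ) {Y : Finset U} (hYV : Y ⊆ V) (hWV : W ⊆ V)
    (hYW : Disjoint Y W) (hW : j * s ≤ #W) :
    #{v ∈ Y | #{w ∈ W | G.Adj v w} < j} ≤ j * s := by
  classical
  induction j generalizing W with
  | zero => simp only [Nat.not_lt_zero, filter_false, card_empty, Nat.zero_le]
  | succ j ih =>
    rw [add_mul, one_mul] at hW ⊢
    obtain ⟨W₁, hW₁, hcard⟩ := exists_subset_card_eq (s := W) (n := s) (by omega)
    have hisolated : #{v ∈ Y | ∀ w ∈ W₁, ¬ G.Adj v w} ≤ s := by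
      by_contra! hlt
      obtain ⟨a, ha, b, hb, hab⟩ := hV _ ((filter_subset _ Y).trans hYV) W₁ (hW₁.trans hWV) hlt.le
        hcard.ge ((hYW.mono_right hW₁).mono_left (filter_subset _ Y))
      exact (mem_filter.mp ha).2 b hb hab
    have hrest : #{v ∈ Y | #{w ∈ W \ W₁ | G.Adj v w} < j} ≤ j * s :=
      ih (sdiff_subset.trans hWV) (hYW.mono_right sdiff_subset)
        (by rw [card_sdiff_of_subset hW₁, hcard]; omega)
    have hsub : {v ∈ Y | #{w ∈ W | G.Adj v w} < j + 1} ⊆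
        {v ∈ Y | #{w ∈ W \ W₁ | G.Adj v w} < j} ∪ {v ∈ Y | ∀ w ∈ W₁, ¬ G.Adj v w} := by
      intro v hv
      obtain ⟨hvY, hvW⟩ := mem_filter.mp hv
      rw [mem_union, mem_filter, mem_filter, and_iff_right hvY, and_iff_right hvY,
        or_iff_not_imp_right]
      intro hnbr
      push Not at hnbr
      obtain ⟨w, hw, hvw⟩ := hnbr
      have hlt : #{w ∈ W \ W₁ | G.Adj v w} < #{w ∈ W | G.Adj v w} :=
        card_lt_card ((filter_subset_filter _ sdiff_subset).ssubset_of_mem_notMem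
          (mem_filter.mpr ⟨hW₁ hw, hvw⟩) fun h => (mem_sdiff.mp (mem_filter.mp h).1).2 hw)
      omega
    exact ((card_le_card hsub).trans (card_union_le _ _)).trans (add_le_add hrest hisolated)

theorem AvoidsStars.exists_of_injOn {κ : Type*} {k m B : ℕ} {φ : Finset ℕ → κ}
    (hφ : AvoidsStars s k m B φ) (hV : IsJoiningOn G s V) (hm : m ≤ #V) {g : U → ℕ}
    (hg : Set.InjOn g V) (hgB : ∀ x ∈ V, g x < B) (c : κ) :
    ∃ e ⊆ V, #e = k ∧ IsStarEdge G e ∧ φ (e.image g) ≠ c := by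
  let G' : SimpleGraph ℕ := .fromRel fun a b => ∃ x ∈ V, ∃ y ∈ V, g x = a ∧ g y = b ∧ G.Adj x y
  have adj_iff {x y : U} (hx : x ∈ V) (hy : y ∈ V) : G'.Adj (g x) (g y) ↔ G.Adj x y := by
    refine ⟨?_, fun hxy => (SimpleGraph.fromRel_adj _ _ _).mpr
      ⟨hg.ne hx hy hxy.ne, .inl ⟨x, hx, y, hy, rfl, rfl, hxy⟩⟩⟩
    rintro ⟨-, ⟨x', hx', y', hy', hxx', hyy', hadj⟩ | ⟨y', hy', x', hx', hyy', hxx', hadj⟩⟩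
    · rwa [← hg hx' hx hxx', ← hg hy' hy hyy']
    · rw [← hg hx' hx hxx', ← hg hy' hy hyy']
      exact hadj.symm
  have hjoin : IsJoiningOn G' s (V.image g) := by
    intro A hA B hB hsA hsB hAB
    obtain ⟨A, hAV, rfl⟩ := subset_image_iff.mp hA
    obtain ⟨B, hBV, rfl⟩ := subset_image_iff.mp hB
    obtain ⟨a, ha, b, hb, hab⟩ := hV A hAV B hBV (hsA.trans card_image_le) (hsB.trans card_image_le)
      (disjoint_left.mpr fun x hxA hxB =>
        disjoint_left.mp hAB (mem_image_of_mem g hxA) (mem_image_of_mem g hxB))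
    exact ⟨g a, mem_image_of_mem g ha, g b, mem_image_of_mem g hb,
      (adj_iff (hAV ha) (hBV hb)).mpr hab⟩
  obtain ⟨e, he, hek, hstar, hne⟩ := hφ G' (V.image g)
    (image_subset_iff.mpr fun x hx => mem_range.mpr (hgB x hx))
    (by rwa [card_image_of_injOn hg]) hjoin c
  obtain ⟨e, heV, rfl⟩ := subset_image_iff.mp he
  refine ⟨e, heV, by rwa [card_image_of_injOn (hg.mono (coe_subset.mpr heV))] at hek, ?_, hne⟩
  obtain ⟨v, hv, z, hz, hzv, hadj⟩ := hstar
  obtain ⟨v, hve, rfl⟩ := mem_image.mp hv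
  obtain ⟨z, hze, rfl⟩ := mem_image.mp hz
  refine ⟨v, hve, z, hze, fun h => hzv (congrArg g h), fun u hu huv huz => ?_⟩
  exact (adj_iff (heV hve) (heV hu)).mp (hadj (g u) (mem_image_of_mem g hu)
    (hg.ne (heV hu) (heV hve) huv) (hg.ne (heV hu) (heV hze) huz))

end Joining

theorem exists_card_le_add_card_level {α : Type*} {M : Finset α} {d : α → ℕ} {s : ℕ}
    (h : ∀ t, #{v ∈ M | t < d v} < s ∨ #{v ∈ M | d v ≤ t} < s) :
    ∃ t, #M ≤ 2 * s + #{v ∈ M | d v = t} := by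
  classical
  have hex : ∃ t, #{v ∈ M | t < d v} < s := by
    refine ⟨M.sup d, ?_⟩
    rw [filter_false_of_mem fun v hv => (le_sup hv).not_gt, card_empty]
    exact (h 0).elim Nat.zero_lt_of_lt Nat.zero_lt_of_lt
  obtain ⟨t, hgt, hmin⟩ := Nat.findX hex
  have hlt : #{v ∈ M | d v < t} ≤ s := by
    cases t with
    | zero => simp only [Nat.not_lt_zero, filter_false, card_empty, Nat.zero_le]
    | succ t => simpa only [Nat.lt_succ_iff] using ((h t).resolve_left (hmin t t.lt_succ_self)).le
  have hsub : M ⊆ {v ∈ M | t < d v} ∪ ({v ∈ M | d v < t} ∪ {v ∈ M | d v = t}) := fun v hv => by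
    simp only [mem_union, mem_filter, hv, true_and]
    omega
  have hM := (card_le_card hsub).trans (card_union_le _ _)
  have hrest := card_union_le {v ∈ M | d v < t} {v ∈ M | d v = t}
  exact ⟨t, by omega⟩

/-! ### Stepping up -/

/-- `ψ` determines the colour of the branch positions under `φ` on combs of the same orientation. -/
def RefinesOnCombs {κ κ' : Type*} (ψ : Finset ℕ → κ') (φ : Finset ℕ → κ) : Prop :=
  ∀ o S T, IsComb o S → IsComb o T → ψ S = ψ T → φ (branchPositions S) = φ (branchPositions T)

/-- Relative to the root path given by `p` and `h`, the vertices `v ≠ v'` leave at the same level,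
their `G`-neighbour `u` leaves above them, and `v` is adjacent to the vertices `N` at the end of
the path. -/
structure IsFork (G : SimpleGraph ℕ) (p h u v v' : ℕ) (N : Finset ℕ) : Prop where
  pos : 0 < exitLevel p h v
  ne : v' ≠ v
  level_eq : exitLevel p h v' = exitLevel p h v
  level_lt : exitLevel p h v < exitLevel p h u
  adj : G.Adj v u
  adj_core : ∀ w ∈ N, G.Adj v w
  core : ∀ w ∈ N, exitLevel p h w = 0

/-- No fork with at least `k` vertices at the end of the path has all its star edges of size
`k + 1` in one colour of `ψ`. -/
def SplitsForks {κ : Type*} (k : ℕ) (ψ : Finset ℕ → κ) : Prop :=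
  ∀ (G : SimpleGraph ℕ) (p h u v v' : ℕ) (N : Finset ℕ), IsFork G p h u v v' N → k ≤ #N →
    ∀ c, ∃ e ⊆ {u, v, v'} ∪ N, #e = k + 1 ∧ IsStarEdge G e ∧ ψ e ≠ c

section StepUp

variable {κ κ' : Type*} {G : SimpleGraph ℕ} {s k m B p h : ℕ} {V X : Finset ℕ} {o : Ordering}
  {φ : Finset ℕ → κ} {ψ : Finset ℕ → κ'} {c : κ'}

theorem SplitsForks.card_le [DecidableRel G.Adj] (hψ : SplitsForks k ψ)
    (hV : IsJoiningOn G s V) (hlevel : ∀ t > 0, 2 * #{v ∈ V | exitLevel p h v = t} ≤ #V)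
    (hc : ∀ e ⊆ V, #e = k + 1 → IsStarEdge G e → ψ e = c) (hXV : X ⊆ V)
    (hpos : ∀ v ∈ X, 0 < exitLevel p h v)
    (hcore : ∀ v ∈ X, k ≤ #{w ∈ V | exitLevel p h w = 0 ∧ G.Adj v w})
    (htwin : ∀ v ∈ X, ∃ v' ∈ V, v' ≠ v ∧ exitLevel p h v' = exitLevel p h v) :
    2 * #X ≤ 4 * s + #V := by
  obtain ⟨t, ht⟩ := exists_card_le_add_card_level (M := X) (d := exitLevel p h) (s := s) fun t => by
    by_contra! hlarge
    obtain ⟨u, hu, v, hv, huv⟩ := hV _ ((filter_subset _ X).trans hXV) _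
      ((filter_subset _ X).trans hXV) hlarge.1 hlarge.2
      (disjoint_filter.mpr fun x _ hx => hx.not_ge)
    obtain ⟨hu, htu⟩ := mem_filter.mp hu
    obtain ⟨hv, hvt⟩ := mem_filter.mp hv
    obtain ⟨v', hv', hne, heq⟩ := htwin v hv
    have hfork : IsFork G p h u v v' {w ∈ V | exitLevel p h w = 0 ∧ G.Adj v w} :=
      ⟨hpos v hv, hne, heq, hvt.trans_lt htu, huv.symm, fun w hw => (mem_filter.mp hw).2.2,
        fun w hw => (mem_filter.mp hw).2.1⟩
    obtain ⟨e, he, hek, hstar, hne⟩ := hψ G p h u v v' _ hfork (hcore v hv) c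
    refine hne (hc e (he.trans (union_subset ?_ (filter_subset _ V))) hek hstar)
    simp only [insert_subset_iff, singleton_subset_iff]
    exact ⟨hXV hu, hXV hv, hv'⟩
  have hle := card_le_card (filter_subset_filter (fun v => exitLevel p h v = t) hXV)
  rcases Nat.eq_zero_or_pos t with rfl | htpos
  · rw [filter_false_of_mem fun v hv => (hpos v hv).ne', card_empty] at ht
    omega
  · have := hlevel t htpos
    omega

theorem card_le_card_core_add [DecidableRel G.Adj] (hV : IsJoiningOn G s V)
    (hcard : k * s ≤ #{v ∈ V | exitLevel p h v = 0}) :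
    #V ≤ #{v ∈ V | exitLevel p h v = 0} + k * s +
      #{v ∈ V | 0 < exitLevel p h v ∧ k ≤ #{w ∈ V | exitLevel p h w = 0 ∧ G.Adj v w}} := by
  have hlow := hV.card_lowDegree_le k (filter_subset (fun v => ¬ exitLevel p h v = 0) V)
    (filter_subset _ V) (disjoint_filter_filter_not V V _).symm hcard
  have hcore := card_filter_add_card_filter_not (s := V) fun v => exitLevel p h v = 0
  have hdeg := card_filter_add_card_filter_not (s := {v ∈ V | ¬ exitLevel p h v = 0})
    fun v => #{w ∈ {w ∈ V | exitLevel p h w = 0} | G.Adj v w} < k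
  simp only [filter_filter, not_lt, ← Nat.pos_iff_ne_zero] at hlow hcore hdeg ⊢
  omega

theorem exists_card_mul_le_of_cmp (X : Finset ℕ) (p : ℕ) :
    ∃ o, #X ≤ 3 * #{x ∈ X | cmp x p = o} := by
  have hsum := card_eq_sum_card_fiberwise (f := (cmp · p)) (s := X) (t := {.lt, .eq, .gt})
    fun x _ => by cases hx : cmp x p <;> simp [hx]
  simp only [mem_insert, reduceCtorEq, mem_singleton, or_self, not_false_eq_true,
    sum_insert, sum_singleton] at hsum
  by_contra! hlt
  have := hlt .lt
  have := hlt .eq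
  have := hlt .gt
  omega

/-- The vertices of `X` leave the root path given by `p` and `h` one at a time and on the same
side `o`, and each has a `G`-neighbour in `V` at the end of the path. -/
structure IsGuidedComb (G : SimpleGraph ℕ) (V : Finset ℕ) (p h : ℕ) (o : Ordering)
    (X : Finset ℕ) : Prop where
  injOn : Set.InjOn (exitLevel p h) X
  pos : ∀ x ∈ X, 0 < exitLevel p h x
  side : ∀ x ∈ X, cmp x p = o
  adj_core : ∀ x ∈ X, ∃ w ∈ {w | w ∈ V ∧ exitLevel p h w = 0}, G.Adj x w

theorem exists_isGuidedComb (hk : 1 ≤ k) (hψ : SplitsForks k ψ) (hV : IsJoiningOn G s V)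
    (hlevel : ∀ t > 0, 2 * #{v ∈ V | exitLevel p h v = t} ≤ #V)
    (hc : ∀ e ⊆ V, #e = k + 1 → IsStarEdge G e → ψ e = c)
    (hlow : k * s ≤ #{v ∈ V | exitLevel p h v = 0})
    (hupp : 4 * #{v ∈ V | exitLevel p h v = 0} ≤ #V) (hm : 12 * m + 4 * (k + 2) * s ≤ #V) :
    ∃ X ⊆ V, ∃ o, m ≤ #X ∧ IsGuidedComb G V p h o X := by
  classical
  set A := {v ∈ V | 0 < exitLevel p h v ∧ k ≤ #{w ∈ V | exitLevel p h w = 0 ∧ G.Adj v w}}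
  have hVA : #V ≤ #{v ∈ V | exitLevel p h v = 0} + k * s + #A := card_le_card_core_add hV hlow
  have hAV : A ⊆ V := filter_subset _ V
  have mem_A {v : ℕ} (hv : v ∈ A) := (mem_filter.mp hv).2
  set D := {v ∈ A | ∃ v' ∈ V, v' ≠ v ∧ exitLevel p h v' = exitLevel p h v}
  have hDA : D ⊆ A := filter_subset _ A
  have hD : 2 * #D ≤ 4 * s + #V := hψ.card_le hV hlevel hc (hDA.trans hAV)
    (fun v hv => (mem_A (hDA hv)).1) (fun v hv => (mem_A (hDA hv)).2)
    fun v hv => (mem_filter.mp hv).2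
  obtain ⟨o, ho⟩ := exists_card_mul_le_of_cmp (A \ D) p
  rw [card_sdiff_of_subset hDA] at ho
  have hXA : {x ∈ A \ D | cmp x p = o} ⊆ A \ D := filter_subset _ _
  have hpos : ∀ x ∈ {x ∈ A \ D | cmp x p = o}, 0 < exitLevel p h x := fun x hx =>
    (mem_A (sdiff_subset (hXA hx))).1
  refine ⟨_, hXA.trans (sdiff_subset.trans hAV), o, by lia, fun x hx y hy hxy => ?_, hpos,
    fun x hx => (mem_filter.mp hx).2, fun x hx => ?_⟩
  · obtain ⟨hyA, hyD⟩ := mem_sdiff.mp (hXA hy)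
    by_contra hne
    exact hyD (mem_filter.mpr ⟨hyA, x, hAV (sdiff_subset (hXA hx)), hne, hxy⟩)
  · have hdeg := (mem_A (sdiff_subset (hXA hx))).2
    obtain ⟨w, hw⟩ := card_pos.mp (hk.trans hdeg)
    obtain ⟨hwV, hw0, hxw⟩ := mem_filter.mp hw
    exact ⟨w, ⟨hwV, hw0⟩, hxw⟩

theorem IsGuidedComb.exists_extension (hX : IsGuidedComb G V p h o X) (hXV : X ⊆ V)
    {e : Finset ℕ} (heX : e ⊆ X) (he : IsStarEdge G e) :
    ∃ T ⊆ V, #T = #e + 1 ∧ IsStarEdge G T ∧ IsComb o T ∧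
      branchPositions T = e.image fun x => exitLevel p h x - 1 := by
  obtain ⟨w, ⟨hwV, hw⟩, hstar⟩ := he.exists_insert fun v hv => hX.adj_core v (heX hv)
  have hpos : ∀ x ∈ e, 0 < exitLevel p h x := fun x hx => hX.pos x (heX hx)
  have hinj : Set.InjOn (exitLevel p h) e := hX.injOn.mono (coe_subset.mpr heX)
  have hwe : w ∉ e := fun hwe => (hpos w hwe).ne' hw
  refine ⟨insert w e, insert_subset hwV (heX.trans hXV), card_insert_of_notMem hwe, hstar,
    isComb_of_injOn_exitLevel (p := p) (h := h) ?_ fun x hx hx0 => ?_,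
    branchPositions_insert hw hpos hinj⟩
  · rw [coe_insert, Set.injOn_insert (mem_coe.not.mpr hwe)]
    refine ⟨hinj, ?_⟩
    rintro ⟨x, hx, hxw⟩
    exact (hpos x hx).ne' (hxw.trans hw)
  · rcases mem_insert.mp hx with rfl | hx
    · exact absurd hw hx0.ne'
    · exact hX.side x (heX hx)

theorem IsGuidedComb.exists_ne (hX : IsGuidedComb G V p h o X) (hXV : X ⊆ V)
    (hXB : ∀ x ∈ X, exitLevel p h x ≤ B) (hφ : AvoidsStars s k m B φ)
    (hψφ : RefinesOnCombs ψ φ) (hV : IsJoiningOn G s V) (hm : m ≤ #X) (c : κ') :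
    ∃ e ⊆ V, #e = k + 1 ∧ IsStarEdge G e ∧ ψ e ≠ c := by
  by_contra! hc
  have hinj : Set.InjOn (fun x => exitLevel p h x - 1) X := fun x hx y hy hxy =>
    hX.injOn hx hy (Nat.sub_one_cancel (hX.pos x hx) (hX.pos y hy) hxy)
  have avoid := hφ.exists_of_injOn (hV.mono hXV) hm hinj fun x hx => by
    have := hX.pos x hx
    have := hXB x hx
    omega
  obtain ⟨e₁, he₁, hk₁, hstar₁, -⟩ := avoid (φ ∅)
  obtain ⟨e₂, he₂, hk₂, hstar₂, hne⟩ := avoid (φ (e₁.image fun x => exitLevel p h x - 1))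
  obtain ⟨T₁, hT₁, hcard₁, hstarT₁, hcomb₁, hbranch₁⟩ := hX.exists_extension hXV he₁ hstar₁
  obtain ⟨T₂, hT₂, hcard₂, hstarT₂, hcomb₂, hbranch₂⟩ := hX.exists_extension hXV he₂ hstar₂
  rw [← hbranch₁, ← hbranch₂] at hne
  exact hne (hψφ o T₂ T₁ hcomb₂ hcomb₁ ((hc T₂ hT₂ (hk₂ ▸ hcard₂) hstarT₂).trans
    (hc T₁ hT₁ (hk₁ ▸ hcard₁) hstarT₁).symm))

theorem AvoidsStars.stepUp (hk : 1 ≤ k) (hs : 1 ≤ s) (hφ : AvoidsStars s k m B φ)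
    (hψφ : RefinesOnCombs ψ φ) (hψ : SplitsForks k ψ) :
    AvoidsStars s (k + 1) (12 * (m + (k + 4) * s)) (2 ^ B) ψ := by
  intro G V hVB hVcard hV c
  have hks : (k + 4) * s = k * s + 4 * s := add_mul k 4 s
  obtain ⟨p, h, hlow, hupp, hB, hlevel⟩ :=
    exists_exitLevel (q := #V / 4) (by omega) hVB (by omega)
  by_contra! hc
  obtain ⟨X, hXV, o, hmX, hX⟩ := exists_isGuidedComb (m := m) hk hψ hV hlevel hc (by omega)
    (by omega) (by lia)
  obtain ⟨e, he, hek, hstar, hne⟩ :=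
    hX.exists_ne hXV (fun x hx => hB x (hXV hx)) hφ hψφ hV hmX c
  exact hne (hc e he hek hstar)

end StepUp

/-! ### The stepping-up colourings -/

section Fork

variable {p h x y z : ℕ} {o : Ordering} {S : Finset ℕ}

theorem swap_cmp_center_ne (hx : 0 < exitLevel p h x) : (cmp x p).swap ≠ cmp x p := by
  have hne : x ≠ p := splitLevel_eq_zero.not.mp (((exitLevel_eq_iff hx).mp rfl).2.trans_ne hx.ne')
  rcases hne.lt_or_gt with hlt | hgt
  · rw [(cmp_eq_lt_iff x p).mpr hlt]
    decide
  · rw [(cmp_eq_gt_iff x p).mpr hgt]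
    decide

theorem isComb_triple_iff_of_lt (hyz : y ≠ z) (hyx : exitLevel p h y < exitLevel p h x)
    (hzx : exitLevel p h z < exitLevel p h x) : IsComb o {x, y, z} ↔ cmp x p = o := by
  refine ⟨fun hcomb => hcomb.cmp_center_eq (by simp) (by simp) (by simp) hyz hyx hzx, ?_⟩
  rintro rfl
  rw [← cmp_eq_cmp_of_exitLevel_lt hyx]
  refine isComb_triple ?_
  rw [splitLevel_eq_exitLevel hyx]
  exact splitLevel_lt_exitLevel hyx hzx

theorem isComb_triple_iff_of_eq (hyz : y ≠ z) (heq : exitLevel p h y = exitLevel p h z)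
    (hxy : exitLevel p h x < exitLevel p h y) : IsComb o {x, y, z} ↔ cmp y p = o.swap := by
  refine ⟨fun hcomb => hcomb.cmp_center_eq_swap (by simp) (by simp) (by simp) hyz heq hxy,
    fun ho => ?_⟩
  have hcmp : cmp x y = o := by
    rw [← cmp_swap, cmp_eq_cmp_of_exitLevel_lt hxy, ho, Ordering.swap_swap]
  rw [← hcmp]
  refine isComb_triple ?_
  rw [splitLevel_comm x y, splitLevel_eq_exitLevel hxy]
  exact splitLevel_lt_of_exitLevel_eq heq le_rfl (Nat.zero_lt_of_lt hxy)

theorem isolatedTop_of_exitLevel_lt (hx : x ∈ S)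
    (hlt : ∀ y ∈ S, y ≠ x → exitLevel p h y < exitLevel p h x) : IsolatedTop S := by
  refine ⟨x, hx, fun y hy z hz hyx hzx => ?_⟩
  rw [splitLevel_eq_exitLevel (hlt y hy hyx)]
  exact splitLevel_lt_exitLevel (hlt y hy hyx) (hlt z hz hzx)

theorem isStarEdge_insert_insert {U : Type*} [DecidableEq U] {G : SimpleGraph U} {v z : U}
    {N : Finset U} (hzv : z ≠ v) (hN : ∀ w ∈ N, G.Adj v w) :
    IsStarEdge G (insert v (insert z N)) := by
  refine ⟨v, mem_insert_self _ _, z, by simp, hzv, fun u hu huv huz => hN u ?_⟩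
  simpa only [mem_insert, huv, huz, false_or] using hu

end Fork

section IsFork

variable {G : SimpleGraph ℕ} {p h k u v v' : ℕ} {N N' : Finset ℕ}

theorem IsFork.mono (hf : IsFork G p h u v v' N) (hN : N' ⊆ N) : IsFork G p h u v v' N' :=
  { hf with
    adj_core := fun w hw => hf.adj_core w (hN hw)
    core := fun w hw => hf.core w (hN hw) }

theorem IsFork.core_lt (hf : IsFork G p h u v v' N) {w : ℕ} (hw : w ∈ N) :
    exitLevel p h w < exitLevel p h v :=
  (hf.core w hw).trans_lt hf.pos

theorem IsFork.center_notMem (hf : IsFork G p h u v v' N) : v ∉ N :=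
  fun hv => (hf.core_lt hv).ne rfl

theorem IsFork.twin_notMem (hf : IsFork G p h u v v' N) : v' ∉ N :=
  fun hv' => (hf.core_lt hv').ne hf.level_eq

theorem IsFork.top_notMem (hf : IsFork G p h u v v' N) : u ∉ N :=
  fun hu => (hf.core_lt hu).not_gt hf.level_lt

theorem IsFork.top_ne_twin (hf : IsFork G p h u v v' N) : u ≠ v' := by
  rintro rfl
  exact hf.level_lt.ne' hf.level_eq

theorem IsFork.not_isolatedTop_twins (hf : IsFork G p h u v v' N) (hN : 1 < #N) :
    ¬ IsolatedTop (insert v (insert v' N)) := by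
  have htwins : splitLevel v v' < exitLevel p h v :=
    splitLevel_lt_of_exitLevel_eq hf.level_eq.symm le_rfl hf.pos
  obtain ⟨w, hw⟩ := card_pos.mp (zero_lt_one.trans hN)
  have hvw := splitLevel_eq_exitLevel (hf.core_lt hw)
  have hv'w : splitLevel v' w = exitLevel p h v := by
    rw [splitLevel_eq_exitLevel ((hf.core_lt hw).trans_eq hf.level_eq.symm), hf.level_eq]
  rintro ⟨x, hx, hall⟩
  simp only [mem_insert] at hx
  rcases hx with rfl | rfl | hx
  · have := hall v' (by simp) w (by simp [hw]) hf.ne (ne_of_mem_of_not_mem hw hf.center_notMem)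
    omega
  · have := hall v (by simp) w (by simp [hw]) hf.ne.symm (ne_of_mem_of_not_mem hw hf.twin_notMem)
    rw [splitLevel_comm] at htwins
    omega
  · obtain ⟨w', hw', hne⟩ := exists_mem_ne hN x
    have hcore : splitLevel x w' < exitLevel p h v :=
      splitLevel_lt_exitLevel (hf.core_lt hx) (hf.core_lt hw')
    have := hall w' (by simp [hw']) v (by simp) hne
      (ne_of_mem_of_not_mem hx hf.center_notMem).symm
    rw [splitLevel_comm w', splitLevel_eq_exitLevel (hf.core_lt hw')] at this
    omega

theorem IsFork.exists_not_isolatedTop (hf : IsFork G p h u v v' N) (hk : 3 ≤ k) (hN : k ≤ #N) :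
    ∃ e ⊆ {u, v, v'} ∪ N, #e = k + 1 ∧ IsStarEdge G e ∧ (¬ ∃ o, IsComb o e) ∧
      ¬ IsolatedTop e := by
  obtain ⟨N', hN', hcard⟩ := exists_subset_card_eq (show k - 1 ≤ #N by omega)
  replace hf := hf.mono hN'
  obtain ⟨w, hw, w', hw', hww'⟩ := one_lt_card.mp (show 1 < #N' by omega)
  refine ⟨insert v (insert v' N'), by grind, ?_, isStarEdge_insert_insert hf.ne hf.adj_core, ?_,
    hf.not_isolatedTop_twins (by omega)⟩
  · rw [card_insert_of_notMem (by simp [hf.ne.symm, hf.center_notMem]),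
      card_insert_of_notMem hf.twin_notMem]
    omega
  · rintro ⟨o, hcomb⟩
    have ho : cmp v p = o := hcomb.cmp_center_eq (by simp) (by simp [hw]) (by simp [hw']) hww'
      (hf.core_lt hw) (hf.core_lt hw')
    have hswap : cmp v p = o.swap := hcomb.cmp_center_eq_swap (by simp [hw]) (by simp) (by simp)
      hf.ne.symm hf.level_eq.symm (hf.core_lt hw)
    exact swap_cmp_center_ne hf.pos (ho ▸ hswap.symm)

theorem IsFork.exists_isolatedTop_of_cmp_eq (hf : IsFork G p h u v v' N) (hk : 3 ≤ k)
    (hN : k ≤ #N) (hside : cmp u p = cmp v p) :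
    ∃ e ⊆ {u, v, v'} ∪ N, #e = k + 1 ∧ IsStarEdge G e ∧ (¬ ∃ o, IsComb o e) ∧ IsolatedTop e := by
  obtain ⟨N', hN', hcard⟩ := exists_subset_card_eq (show k - 2 ≤ #N by omega)
  replace hf := hf.mono hN'
  obtain ⟨w, hw⟩ := card_pos.mp (show 0 < #N' by omega)
  refine ⟨insert v (insert v' (insert u N')), by grind, ?_,
    isStarEdge_insert_insert hf.ne ((forall_mem_insert _ _ _).mpr ⟨hf.adj, hf.adj_core⟩), ?_,
    isolatedTop_of_exitLevel_lt (p := p) (h := h) (x := u) (by simp) fun x hx hxu => ?_⟩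
  · rw [card_insert_of_notMem (by simp [hf.ne.symm, hf.adj.ne, hf.center_notMem]),
      card_insert_of_notMem (by simp [hf.top_ne_twin.symm, hf.twin_notMem]),
      card_insert_of_notMem hf.top_notMem]
    omega
  · rintro ⟨o, hcomb⟩
    have ho : cmp u p = o := hcomb.cmp_center_eq (by simp) (by simp) (by simp [hw])
      (ne_of_mem_of_not_mem hw hf.center_notMem).symm hf.level_lt
      ((hf.core_lt hw).trans hf.level_lt)
    have hswap : cmp v p = o.swap := hcomb.cmp_center_eq_swap (by simp [hw]) (by simp) (by simp)
      hf.ne.symm hf.level_eq.symm (hf.core_lt hw)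
    rw [← ho, hside] at hswap
    exact swap_cmp_center_ne hf.pos hswap.symm
  · simp only [mem_insert, hxu, false_or] at hx
    rcases hx with rfl | rfl | hx
    exacts [hf.level_lt, hf.level_eq.trans_lt hf.level_lt, (hf.core_lt hx).trans hf.level_lt]

theorem IsFork.exists_isolatedTop_of_cmp_ne (hf : IsFork G p h u v v' N) (hk : 3 ≤ k)
    (hN : k ≤ #N) (hside : cmp u p ≠ cmp v p) :
    ∃ e ⊆ {u, v, v'} ∪ N, #e = k + 1 ∧ IsStarEdge G e ∧ (¬ ∃ o, IsComb o e) ∧ IsolatedTop e := by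
  obtain ⟨N', hN', hcard⟩ := exists_subset_card_eq (show k - 1 ≤ #N by omega)
  replace hf := hf.mono hN'
  obtain ⟨w, hw, w', hw', hww'⟩ := one_lt_card.mp (show 1 < #N' by omega)
  refine ⟨insert v (insert u N'), by grind, ?_,
    isStarEdge_insert_insert hf.adj.ne' hf.adj_core, ?_,
    isolatedTop_of_exitLevel_lt (p := p) (h := h) (x := u) (by simp) fun x hx hxu => ?_⟩
  · rw [card_insert_of_notMem (by simp [hf.adj.ne, hf.center_notMem]),
      card_insert_of_notMem hf.top_notMem]
    omega
  · rintro ⟨o, hcomb⟩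
    have hu : cmp u p = o := hcomb.cmp_center_eq (by simp) (by simp) (by simp [hw])
      (ne_of_mem_of_not_mem hw hf.center_notMem).symm hf.level_lt
      ((hf.core_lt hw).trans hf.level_lt)
    have hv : cmp v p = o := hcomb.cmp_center_eq (by simp) (by simp [hw]) (by simp [hw']) hww'
      (hf.core_lt hw) (hf.core_lt hw')
    exact hside (hu.trans hv.symm)
  · simp only [mem_insert, hxu, false_or] at hx
    rcases hx with rfl | hx
    exacts [hf.level_lt, (hf.core_lt hx).trans hf.level_lt]

end IsFork

open Classical in
/-- The stepped-up colouring of triples: the first coordinate makes it refine `χ` on combs, the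
second tells the two orientations of a comb apart. -/
noncomputable def tripleColoring (χ : Finset ℕ → Bool) (S : Finset ℕ) : Bool × Bool :=
  (χ (branchPositions S), decide (IsComb .lt S))

open Classical in
/-- The stepped-up colouring of `(k + 1)`-sets for `k ≥ 3`: on combs it is inherited from `φ`, which
leaves the colours free to separate the remaining sets by `IsolatedTop`. -/
noncomputable def stepColoring (φ : Finset ℕ → Bool × Bool) (S : Finset ℕ) : Bool × Bool :=
  if ∃ o, IsComb o S then φ (branchPositions S) else (decide (IsolatedTop S), false)

theorem refinesOnCombs_tripleColoring (χ : Finset ℕ → Bool) :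
    RefinesOnCombs (tripleColoring χ) χ :=
  fun _ _ _ _ _ hST => congrArg Prod.fst hST

theorem refinesOnCombs_stepColoring (φ : Finset ℕ → Bool × Bool) :
    RefinesOnCombs (stepColoring φ) φ := fun o S T hS hT hST => by
  rwa [stepColoring, stepColoring, if_pos ⟨o, hS⟩, if_pos ⟨o, hT⟩] at hST

theorem splitsForks_tripleColoring (χ : Finset ℕ → Bool) : SplitsForks 2 (tripleColoring χ) := by
  intro G p h u v v' N hf hN c
  by_contra! hc
  obtain ⟨w, hw, w', hw', hww'⟩ := one_lt_card.mp (show 1 < #N by omega)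
  have hvw := hf.adj_core w hw
  have hvw' := hf.adj_core w' hw'
  have hv'w : v' ≠ w := (ne_of_mem_of_not_mem hw hf.twin_notMem).symm
  have htwins := hc {v, v', w} (by grind)
    (card_eq_three.mpr ⟨v, v', w, hf.ne.symm, hvw.ne, hv'w, rfl⟩)
    (isStarEdge_insert_insert hf.ne (by simpa using hvw))
  have hcore := hc {v, w, w'} (by grind) (card_eq_three.mpr ⟨v, w, w', hvw.ne, hvw'.ne, hww', rfl⟩)
    (isStarEdge_insert_insert hvw.ne' (by simpa using hvw'))
  have hiff : IsComb .lt {v, v', w} ↔ IsComb .lt {v, w, w'} :=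
    decide_eq_decide.mp (congrArg Prod.snd (htwins.trans hcore.symm))
  have hrotate : ({v, v', w} : Finset ℕ) = {w, v, v'} := by grind
  rw [hrotate, isComb_triple_iff_of_eq hf.ne.symm hf.level_eq.symm (hf.core_lt hw),
    isComb_triple_iff_of_lt hww' (hf.core_lt hw) (hf.core_lt hw')] at hiff
  have hne := swap_cmp_center_ne hf.pos
  cases hside : cmp v p <;> simp [hside] at hiff hne

theorem splitsForks_stepColoring {k : ℕ} (hk : 3 ≤ k) (φ : Finset ℕ → Bool × Bool) :
    SplitsForks k (stepColoring φ) := by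
  intro G p h u v v' N hf hN c
  by_contra! hc
  obtain ⟨e₁, he₁, hk₁, hstar₁, hcomb₁, htop₁⟩ := hf.exists_not_isolatedTop hk hN
  obtain ⟨e₂, he₂, hk₂, hstar₂, hcomb₂, htop₂⟩ :
      ∃ e ⊆ {u, v, v'} ∪ N, #e = k + 1 ∧ IsStarEdge G e ∧ (¬ ∃ o, IsComb o e) ∧ IsolatedTop e :=
    if hside : cmp u p = cmp v p then hf.exists_isolatedTop_of_cmp_eq hk hN hside
    else hf.exists_isolatedTop_of_cmp_ne hk hN hside
  have hcolor := (hc e₁ he₁ hk₁ hstar₁).trans (hc e₂ he₂ hk₂ hstar₂).symm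
  rw [stepColoring, stepColoring, if_neg hcomb₁, if_neg hcomb₂] at hcolor
  exact htop₁ ((decide_eq_decide.mp (congrArg Prod.fst hcolor)).mpr htop₂)

theorem exists_avoidsStars_iterate (k : ℕ) :
    ∃ C, ∀ {s B : ℕ} {χ : Finset ℕ → Bool}, 1 ≤ s → AvoidsStars s 2 s B χ →
      ∃ ψ : Finset ℕ → Bool × Bool, AvoidsStars s (k + 3) (C * s) ((2 ^ ·)^[k + 1] B) ψ := by
  induction k with
  | zero =>
    refine ⟨84, fun {s B χ} hs hχ => ⟨tripleColoring χ, ?_⟩⟩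
    have := hχ.stepUp (by omega) hs (refinesOnCombs_tripleColoring χ) (splitsForks_tripleColoring χ)
    rwa [show 12 * (s + (2 + 4) * s) = 84 * s by ring] at this
  | succ k ih =>
    obtain ⟨C, hC⟩ := ih
    refine ⟨12 * (C + (k + 7)), fun {s B χ} hs hχ => ?_⟩
    obtain ⟨ψ, hψ⟩ := hC hs hχ
    have := hψ.stepUp (by omega) hs (refinesOnCombs_stepColoring ψ)
      (splitsForks_stepColoring (by omega) ψ)
    rw [show 12 * (C * s + (k + 3 + 4) * s) = 12 * (C + (k + 7)) * s by ring] at this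
    refine ⟨stepColoring ψ, ?_⟩
    rwa [Function.iterate_succ_apply']

/-! ### Random colourings and sparse joining graphs -/

section UnionBound

variable {α : Type*}

theorem exists_mem_forall_notMem {ι : Type*} {Ω : Finset α} {I : Finset ι} {bad : ι → Finset α}
    {b : ℕ} (hbad : ∀ i ∈ I, #(bad i) ≤ b) (h : #I * b < #Ω) : ∃ a ∈ Ω, ∀ i ∈ I, a ∉ bad i := by
  classical
  obtain ⟨a, ha, hnot⟩ :=
    exists_mem_notMem_of_card_lt_card ((card_biUnion_le_card_mul I bad b hbad).trans_lt h)
  exact ⟨a, ha, fun i hi hai => hnot (mem_biUnion.mpr ⟨i, hi, hai⟩)⟩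

theorem exists_coloring_forall_not_monochromatic {S : Finset α} {r s : ℕ}
    (h : 2 * (#S).choose s < 2 ^ s.choose r) :
    ∃ χ : Finset α → Bool, ∀ T ⊆ S, #T = s → ∀ c, ∃ e ⊆ T, #e = r ∧ χ e ≠ c := by
  classical
  let bad (T : Finset α) : Finset (Finset (Finset α)) :=
    Icc (powersetCard r T) (powersetCard r S) ∪ (powersetCard r S \ powersetCard r T).powerset
  have card_bad : ∀ T ∈ powersetCard s S, #(bad T) ≤ 2 * 2 ^ ((#S).choose r - s.choose r) := by
    intro T hT
    obtain ⟨hTS, rfl⟩ := mem_powersetCard.mp hT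
    have hsub := powersetCard_mono (n := r) hTS
    refine (card_union_le _ _).trans_eq ?_
    rw [card_Icc_finset hsub, card_powerset, card_sdiff_of_subset hsub, card_powersetCard,
      card_powersetCard, two_mul]
  have union_bound : #(powersetCard s S) * (2 * 2 ^ ((#S).choose r - s.choose r)) <
      #(powersetCard r S).powerset := by
    rw [card_powersetCard, card_powerset, card_powersetCard]
    rcases lt_or_ge #S s with hlt | hle
    · rw [Nat.choose_eq_zero_of_lt hlt, zero_mul]
      exact Nat.two_pow_pos _
    · calc (#S).choose s * (2 * 2 ^ ((#S).choose r - s.choose r))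
          = 2 * (#S).choose s * 2 ^ ((#S).choose r - s.choose r) := by ring
        _ < 2 ^ s.choose r * 2 ^ ((#S).choose r - s.choose r) := by gcongr
        _ = 2 ^ (#S).choose r := by
          rw [← pow_add, Nat.add_sub_cancel' (Nat.choose_le_choose r hle)]
  obtain ⟨F, hF, hgood⟩ := exists_mem_forall_notMem card_bad union_bound
  refine ⟨fun e => decide (e ∈ F), fun T hTS hT c => ?_⟩
  by_contra! hmono
  refine hgood T (mem_powersetCard.mpr ⟨hTS, hT⟩) (mem_union.mpr ?_)
  rw [mem_powerset] at hF
  cases c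
  · refine .inr (mem_powerset.mpr fun e he => mem_sdiff.mpr ⟨hF he, fun heT => ?_⟩)
    obtain ⟨heT, hr⟩ := mem_powersetCard.mp heT
    exact of_decide_eq_false (hmono e heT hr) he
  · refine .inl (mem_Icc.mpr ⟨fun e he => ?_, hF⟩)
    obtain ⟨heT, hr⟩ := mem_powersetCard.mp he
    exact of_decide_eq_true (hmono e heT hr)

theorem exists_forall_exists_apply_mem [Fintype α] {𝒜 : Finset (Finset α)} {a m : ℕ}
    (ha : ∀ A ∈ 𝒜, a ≤ #A) (h : #𝒜 * (Fintype.card α - a) ^ m < Fintype.card α ^ m) :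
    ∃ g : Fin m → α, ∀ A ∈ 𝒜, ∃ i, g i ∈ A := by
  classical
  obtain ⟨g, -, hg⟩ := exists_mem_forall_notMem (Ω := (univ : Finset (Fin m → α))) (I := 𝒜)
    (bad := fun A => Fintype.piFinset fun _ => Aᶜ) (b := (Fintype.card α - a) ^ m)
    (fun A hA => by
      rw [Fintype.card_piFinset_const, card_compl]
      exact Nat.pow_le_pow_left (Nat.sub_le_sub_left (ha A hA) _) m)
    (by rwa [card_univ, Fintype.card_pi_const])
  refine ⟨g, fun A hA => ?_⟩
  by_contra! hmiss
  exact hg A hA (Fintype.mem_piFinset.mpr fun i => mem_compl.mpr (hmiss i))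

end UnionBound

theorem two_pow_mul_sub_pow_lt {t N a m : ℕ} (ht : 0 < t) (hN : 0 < N) (h : t * N ≤ m * a) :
    2 ^ t * (N - a) ^ m < N ^ m := by
  have hN' : (0 : ℝ) < N := Nat.cast_pos.mpr hN
  have hsub : ((N - a : ℕ) : ℝ) ≤ N * Real.exp (-(a / N)) := by
    rcases le_total a N with ha | ha
    · calc ((N - a : ℕ) : ℝ) = N * (1 - a / N) := by rw [Nat.cast_sub ha]; field_simp
        _ ≤ N * Real.exp (-(a / N)) := by gcongr; exact Real.one_sub_le_exp_neg _
    · rw [Nat.sub_eq_zero_of_le ha, Nat.cast_zero]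
      positivity
  have hexp : (t : ℝ) ≤ m * (a / N) := by
    rw [← mul_div_assoc, le_div_iff₀ hN']
    exact_mod_cast h
  have htwo : (2 : ℝ) ^ t < Real.exp t := by
    rw [← mul_one (t : ℝ), Real.exp_nat_mul]
    exact pow_lt_pow_left₀ (by linarith [Real.exp_one_gt_d9]) (by norm_num) ht.ne'
  have hreal : (2 : ℝ) ^ t * ((N - a : ℕ) : ℝ) ^ m < N ^ m := calc
    (2 : ℝ) ^ t * ((N - a : ℕ) : ℝ) ^ m ≤ 2 ^ t * (N * Real.exp (-(a / N))) ^ m := by gcongr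
    _ = N ^ m * (2 ^ t * Real.exp (-(m * (a / N)))) := by
      rw [mul_pow, ← Real.exp_nat_mul, mul_neg]
      ring
    _ ≤ N ^ m * (2 ^ t * Real.exp (-t)) := by gcongr
    _ < N ^ m * 1 := by
      gcongr
      rwa [Real.exp_neg, ← div_eq_mul_inv, div_lt_one (Real.exp_pos _)]
    _ = N ^ m := mul_one _
  exact_mod_cast hreal

theorem isStarEdge_of_card_eq_two {U : Type*} (G : SimpleGraph U) {e : Finset U} (he : #e = 2) :
    IsStarEdge G e := by
  classical
  obtain ⟨x, y, hxy, rfl⟩ := card_eq_two.mp he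
  exact ⟨x, by simp, y, by simp, hxy.symm, fun u hu hux huy => by simp [hux, huy] at hu⟩

theorem exists_avoidsStars_pairs {s : ℕ} (hs : 4 ≤ s) (r : ℕ) :
    ∃ χ : Finset ℕ → Bool, AvoidsStars r 2 s (2 ^ (s / 4)) χ := by
  have hchoose : 2 * (#(range (2 ^ (s / 4)))).choose s < 2 ^ s.choose 2 := calc
    _ ≤ 2 * (2 ^ (s / 4)) ^ s := by
      rw [card_range]
      gcongr
      exact Nat.choose_le_pow _ _
    _ = 2 ^ (s / 4 * s + 1) := by rw [← pow_mul, ← pow_succ']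
    _ < 2 ^ s.choose 2 := by
      refine Nat.pow_lt_pow_right one_lt_two ?_
      rw [Nat.choose_two_right, Nat.lt_div_iff_mul_lt two_pos]
      obtain ⟨t, rfl⟩ : ∃ t, s = t + 4 := ⟨s - 4, by omega⟩
      have hfloor : (t + 4) / 4 * 4 ≤ t + 4 := Nat.div_mul_le_self _ _
      have : ((t + 4) / 4 * (t + 4) + 1) * 2 + 2 ≤ (t + 4) * (t + 3) := by nlinarith
      rw [show t + 4 - 1 = t + 3 by omega]
      omega
  obtain ⟨χ, hχ⟩ := exists_coloring_forall_not_monochromatic hchoose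
  refine ⟨χ, fun G V hVB hsV _ c => ?_⟩
  obtain ⟨T, hTV, hT⟩ := exists_subset_card_eq hsV
  obtain ⟨e, heT, he, hec⟩ := hχ T (hTV.trans hVB) hT c
  exact ⟨e, heT.trans hTV, he, isStarEdge_of_card_eq_two G he, hec⟩

section SparseJoiningGraphs

variable {U : Type*} [Fintype U] {s : ℕ}

theorem exists_isJoiningOn_ncard_edgeSet_le [Nonempty U] {m : ℕ}
    (h : 2 * Fintype.card U ^ 3 ≤ m * s ^ 2) :
    ∃ G : SimpleGraph U, IsJoiningOn G s univ ∧ G.edgeSet.ncard ≤ m := by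
  classical
  let 𝒜 : Finset (Finset (U × U)) :=
    ({p : Finset U × Finset U | s ≤ #p.1 ∧ s ≤ #p.2} : Finset _).image fun p => p.1 ×ˢ p.2
  have card_le : ∀ A ∈ 𝒜, s ^ 2 ≤ #A := by
    simp only [𝒜, forall_mem_image, mem_filter, mem_univ, true_and, card_product, sq]
    exact fun _ hp => Nat.mul_le_mul hp.1 hp.2
  have card_𝒜 : #𝒜 ≤ 2 ^ (2 * Fintype.card U) := by
    refine (card_image_le.trans (card_filter_le _ _)).trans_eq ?_
    rw [card_univ, Fintype.card_prod, Fintype.card_finset, two_mul, pow_add]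
  have hcard : Fintype.card (U × U) = Fintype.card U ^ 2 := by rw [Fintype.card_prod, sq]
  obtain ⟨g, hg⟩ := exists_forall_exists_apply_mem (m := m) card_le <| by
    refine (Nat.mul_le_mul_right _ card_𝒜).trans_lt
      (two_pow_mul_sub_pow_lt (by have := Fintype.card_pos (α := U); omega) Fintype.card_pos ?_)
    rw [hcard]
    linarith
  refine ⟨.fromEdgeSet (Set.range fun i => s((g i).1, (g i).2)), ?_, ?_⟩
  · intro A _ B _ hA hB hAB
    obtain ⟨i, hi⟩ := hg (A ×ˢ B) (mem_image.mpr ⟨(A, B), by simp [hA, hB], rfl⟩)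
    obtain ⟨hiA, hiB⟩ := mem_product.mp hi
    exact ⟨_, hiA, _, hiB, (SimpleGraph.fromEdgeSet_adj _).mpr
      ⟨⟨i, rfl⟩, hAB.forall_ne_finset hiA hiB⟩⟩
  · rw [SimpleGraph.edgeSet_fromEdgeSet, ← Set.image_univ]
    exact (Set.ncard_le_ncard Set.sdiff_subset (Set.toFinite _)).trans
      ((Set.ncard_image_le Set.finite_univ).trans_eq (by rw [Set.ncard_univ, Nat.card_fin]))

open Classical in
theorem IsJoiningOn.exists_degree_le {G : SimpleGraph U} (hG : IsJoiningOn G s univ) {T : ℕ}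
    (h : 2 * G.edgeSet.ncard ≤ T * s) :
    ∃ Γ : SimpleGraph U, IsJoiningOn Γ (2 * s) univ ∧ ∀ v, Γ.degree v ≤ T := by
  let high : Finset U := {v | T < G.degree v}
  have card_high : #high ≤ s := by
    have hsum : #high * (T + 1) ≤ T * s := calc
      #high * (T + 1) ≤ ∑ v ∈ high, G.degree v := by
        rw [← smul_eq_mul]
        exact card_nsmul_le_sum _ _ _ fun v hv => (mem_filter.mp hv).2
      _ ≤ ∑ v, G.degree v := sum_le_sum_of_subset (subset_univ _)
      _ ≤ T * s := by
        rwa [G.sum_degrees_eq_twice_card_edges, SimpleGraph.edgeFinset,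
          ← Set.ncard_eq_toFinset_card']
    nlinarith
  obtain ⟨Γ, hΓ⟩ : ∃ Γ : SimpleGraph U, ∀ a b, Γ.Adj a b ↔ G.Adj a b ∧ a ∉ high ∧ b ∉ high :=
    ⟨{  Adj a b := G.Adj a b ∧ a ∉ high ∧ b ∉ high
        symm := ⟨fun _ _ hab => ⟨hab.1.symm, hab.2.2, hab.2.1⟩⟩
        loopless := ⟨fun _ haa => haa.1.ne rfl⟩ }, fun _ _ => Iff.rfl⟩
  refine ⟨Γ, fun A _ B _ hA hB hAB => ?_, fun v => ?_⟩
  · have card_sdiff_high {X : Finset U} (hX : 2 * s ≤ #X) : s ≤ #(X \ high) := by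
      have := le_card_sdiff high X
      omega
    obtain ⟨a, ha, b, hb, hab⟩ := hG (A \ high) (subset_univ _) (B \ high) (subset_univ _)
      (card_sdiff_high hA) (card_sdiff_high hB) (hAB.mono sdiff_subset sdiff_subset)
    rw [mem_sdiff] at ha hb
    exact ⟨a, ha.1, b, hb.1, (hΓ a b).mpr ⟨hab, ha.2, hb.2⟩⟩
  · by_cases hv : v ∈ high
    · have : Γ.degree v = 0 := by
        rw [← SimpleGraph.card_neighborFinset_eq_degree, card_eq_zero, eq_empty_iff_forall_notMem]
        exact fun w hw => ((hΓ v w).mp ((Γ.mem_neighborFinset v w).mp hw)).2.1 hv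
      omega
    · have hle : Γ ≤ G := fun a b hab => ((hΓ a b).mp hab).1
      exact (SimpleGraph.degree_le_of_le hle).trans (by simpa [high] using hv)

open Classical in
theorem exists_isJoiningOn_degree_le [Nonempty U] {K : ℕ} (h : Fintype.card U ≤ K * s) :
    ∃ Γ : SimpleGraph U, IsJoiningOn Γ (2 * s) univ ∧ ∀ v, Γ.degree v ≤ 4 * K ^ 3 := by
  obtain ⟨G, hG, hedges⟩ :=
    exists_isJoiningOn_ncard_edgeSet_le (U := U) (s := s) (m := 2 * K ^ 2 * Fintype.card U) <|
      calc 2 * Fintype.card U ^ 3 = 2 * Fintype.card U * Fintype.card U ^ 2 := by ring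
        _ ≤ 2 * Fintype.card U * (K * s) ^ 2 := by gcongr
        _ = 2 * K ^ 2 * Fintype.card U * s ^ 2 := by ring
  refine hG.exists_degree_le ?_
  calc 2 * G.edgeSet.ncard ≤ 2 * (2 * K ^ 2 * (K * s)) := by grw [hedges, h]
    _ = 4 * K ^ 3 * s := by ring

end SparseJoiningGraphs

open Classical in
/-- The `k`-uniform hypergraph of all star edges of `Γ` with `k` vertices. -/
noncomputable def starEdges {U : Type*} [Fintype U] (Γ : SimpleGraph U) (k : ℕ) :
    Finset (Finset U) :=
  {e | #e = k ∧ IsStarEdge Γ e}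

theorem mem_starEdges {U : Type*} [Fintype U] {Γ : SimpleGraph U} {k : ℕ} {e : Finset U} :
    e ∈ starEdges Γ k ↔ #e = k ∧ IsStarEdge Γ e := by
  simp only [starEdges, mem_filter_univ]

open Classical in
theorem card_filter_mem_starEdges_le {U : Type*} [Fintype U] [DecidableEq U] {Γ : SimpleGraph U}
    {T : ℕ} (hT : ∀ v, Γ.degree v ≤ T) (k : ℕ) (x : U) :
    #{e ∈ starEdges Γ k | x ∈ e} ≤ (T + 2) * 2 ^ T * Fintype.card U := by
  let centered (p : U × U) : Finset (Finset U) :=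
    (Γ.neighborFinset p.1).powerset.image fun S => insert p.1 (insert p.2 S)
  let pairs : Finset (U × U) := insert x (Γ.neighborFinset x) ×ˢ univ ∪ univ ×ˢ {x}
  have card_centered : ∀ p ∈ pairs, #(centered p) ≤ 2 ^ T := fun p _ => by
    refine card_image_le.trans ?_
    rw [card_powerset, SimpleGraph.card_neighborFinset_eq_degree]
    exact Nat.pow_le_pow_right two_pos (hT p.1)
  have card_pairs : #pairs ≤ (T + 2) * Fintype.card U := calc
    #pairs ≤ (T + 1) * Fintype.card U + Fintype.card U * 1 := by
      refine (card_union_le _ _).trans ?_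
      rw [card_product, card_product, card_univ, card_singleton]
      gcongr
      exact (card_insert_le _ _).trans (Nat.succ_le_succ (hT x))
    _ = (T + 2) * Fintype.card U := by ring
  have cover : {e ∈ starEdges Γ k | x ∈ e} ⊆ pairs.biUnion centered := by
    intro e he
    obtain ⟨hstar, hxe⟩ := mem_filter.mp he
    obtain ⟨v, hv, z, hz, hzv, hadj⟩ := (mem_starEdges.mp hstar).2
    refine mem_biUnion.mpr ⟨(v, z), ?_, mem_image.mpr ⟨(e.erase v).erase z, ?_, ?_⟩⟩
    · have hxv : x ≠ v → x ≠ z → Γ.Adj x v := fun hv hz => (hadj x hxe hv hz).symm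
      simp only [pairs, mem_union, mem_product, mem_insert, mem_univ, mem_singleton,
        SimpleGraph.mem_neighborFinset, and_true, true_and]
      grind
    · simp only [mem_powerset, subset_iff, mem_erase, SimpleGraph.mem_neighborFinset]
      exact fun u hu => hadj u hu.2.2 hu.2.1 hu.1
    · rw [insert_erase (mem_erase.mpr ⟨hzv, hz⟩), insert_erase hv]
  calc #{e ∈ starEdges Γ k | x ∈ e} ≤ #pairs * 2 ^ T :=
        (card_le_card cover).trans (card_biUnion_le_card_mul _ _ _ card_centered)
    _ ≤ (T + 2) * Fintype.card U * 2 ^ T := by gcongr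
    _ = (T + 2) * 2 ^ T * Fintype.card U := by ring

theorem AvoidsStars.le_hypRamsey {U κ : Type} [Fintype U] [DecidableEq U] [Fintype κ]
    {s k m B : ℕ} {ψ : Finset ℕ → κ} (hψ : AvoidsStars s k m B ψ) {Γ : SimpleGraph U}
    (hΓ : IsJoiningOn Γ s univ) (hm : m ≤ Fintype.card U) :
    B ≤ hypRamsey (Fintype.card κ) (starEdges Γ k) := by
  refine _root_.le_hypRamsey (fun e he => (mem_starEdges.mp he).1) ψ fun f hf c => ?_
  obtain ⟨e, -, hek, hstar, hne⟩ :=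
    hψ.exists_of_injOn hΓ (by rwa [card_univ]) f.injective.injOn (fun v _ => hf v) c
  exact ⟨e, mem_starEdges.mpr ⟨hek, hstar⟩, by rwa [map_eq_image]⟩

theorem tw_le_iterate_two_pow (k : ℕ) {x : ℝ} {t : ℕ} (hx : x ≤ t) :
    tw (k + 1) x ≤ ((2 ^ ·)^[k] t : ℕ) := by
  induction k with
  | zero => exact hx
  | succ k ih =>
    rw [tw, Function.iterate_succ_apply', Nat.cast_pow, Nat.cast_ofNat, ← Real.rpow_natCast]
    exact Real.rpow_le_rpow_of_exponent_le one_le_two ih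

theorem exists_joining_scale (C : ℕ) : ∃ L > 0, ∀ n ≥ 2 * L,
    ∃ s, 2 ≤ s ∧ C * (2 * s) ≤ n ∧ n ≤ 2 * L * s ∧ n ≤ 2 * s / 4 * (6 * L) := by
  refine ⟨2 * C + 1, by omega, fun n hn => ?_⟩
  set L := 2 * C + 1
  have hfloor : L * (n / L) ≤ n := Nat.mul_div_le n L
  have hceil : n < L * (n / L + 1) := Nat.lt_mul_div_succ n (by omega)
  have htwo : 2 ≤ n / L := (Nat.le_div_iff_mul_le (by omega)).mpr hn
  have hthree : n / L ≤ 3 * (2 * (n / L) / 4) := by omega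
  exact ⟨n / L, htwo, by lia, by nlinarith, by nlinarith⟩

/-- For every `k ≥ 3` there are constants `c, c' > 0` such that for every sufficiently
large `n` there is a `k`-uniform hypergraph on `n` vertices with maximum degree at most
`c * n` whose `4`-color Ramsey number is at least `tw k (c' * n)`. -/
theorem bounded_degree_lower_bound (k : ℕ) (hk : 3 ≤ k) :
    ∃ c c' : ℝ, 0 < c ∧ 0 < c' ∧
      ∃ n₀ : ℕ, ∀ n : ℕ, n₀ ≤ n →
        ∃ E : Finset (Finset (Fin n)),
          (∀ e ∈ E, e.card = k) ∧
          (∀ v : Fin n, ((E.filter (fun e => v ∈ e)).card : ℝ) ≤ c * n) ∧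
          tw k (c' * n) ≤ (hypRamsey 4 E : ℝ) := by
  obtain ⟨k, rfl⟩ : ∃ j, k = j + 3 := ⟨k - 3, by omega⟩
  obtain ⟨C, hC⟩ := exists_avoidsStars_iterate k
  obtain ⟨L, hL, hscale⟩ := exists_joining_scale C
  let T := 4 * (2 * L) ^ 3
  refine ⟨((T + 2) * 2 ^ T : ℕ), 1 / (6 * L), by positivity, by positivity, 2 * L, fun n hn => ?_⟩
  obtain ⟨s, hs, hCs, hns, hquarter⟩ := hscale n hn
  have : Nonempty (Fin n) := ⟨⟨0, by omega⟩⟩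
  obtain ⟨Γ, hΓ, hdeg⟩ := exists_isJoiningOn_degree_le (hns.trans' (Fintype.card_fin n).le)
  obtain ⟨χ, hχ⟩ := exists_avoidsStars_pairs (s := 2 * s) (by omega) (2 * s)
  obtain ⟨ψ, hψ⟩ := hC (by omega) hχ
  refine ⟨starEdges Γ (k + 3), fun e he => (mem_starEdges.mp he).1, fun v => ?_, ?_⟩
  · have := card_filter_mem_starEdges_le hdeg (k + 3) v
    rw [Fintype.card_fin] at this
    exact_mod_cast this
  · have htower : 1 / (6 * L) * (n : ℝ) ≤ (2 * s / 4 : ℕ) := by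
      rw [one_div_mul_eq_div, div_le_iff₀ (by positivity)]
      exact_mod_cast hquarter
    exact (tw_le_iterate_two_pow (k + 2) htower).trans
      (Nat.cast_le.mpr (hψ.le_hypRamsey hΓ (by rwa [Fintype.card_fin])))
end
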